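/- arXiv:2506.11296 — 4 statements merged into one kernel-verified Lean document; each statement's English description precedes it below -/
import Mathlib

section
/- Let α ∈ (0,1) and ν > -1. Then ∫_0^∞ W_{-α,1-α}(-r) r^ν dr = Γ(ν+1)/Γ(να+1). -/
open Real MeasureTheory Filter Topology

/-- The Wright function `W_{λ,μ}(z) = ∑ z^n / (n! Γ(λn+μ))`.
(In Mathlib, `Real.Gamma` vanishes at nonpositive integers, so `1/Γ(s) = 0` there.) -/
noncomputable def wrightFn (l μ z : ℝ) : ℝ :=
  ∑' n : ℕ, z ^ n / (n.factorial * Real.Gamma (l * n + μ))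

lemma aux_int (a b : ℝ) (ha : 0 < a) (hb : 0 < b) :
    IntegrableOn (fun t : ℝ => t ^ (a - 1) * Real.exp (-(b * t))) (Set.Ioi 0) := by
  have := integrableOn_rpow_mul_exp_neg_mul_rpow (p := 1) (s := a - 1) (b := b) (by linarith)
    one_pos hb
  simpa using this

lemma aux_cont (a : ℝ) : ContinuousOn (fun t : ℝ => t ^ (a - 1)) (Set.Ioi 0) :=
  continuousOn_id.rpow_const (fun _ hx => Or.inl (ne_of_gt hx))

lemma aux_meas (a : ℝ) (z : ℂ) : AEStronglyMeasurable
    (fun t : ℝ => ((t ^ (a - 1) : ℝ) : ℂ) * Complex.exp (-(z * t))) (volume.restrict (Set.Ioi 0)) := by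
  apply Measurable.aestronglyMeasurable
  fun_prop

lemma aux_norm (a : ℝ) (z : ℂ) (t : ℝ) (ht : 0 < t) :
    ‖((t ^ (a - 1) : ℝ) : ℂ) * Complex.exp (-(z * t))‖ = t ^ (a - 1) * Real.exp (-(z.re * t)) := by
  rw [norm_mul, Complex.norm_exp, Complex.norm_real, Real.norm_of_nonneg (by positivity)]
  simp

lemma aux_intC (a : ℝ) (z : ℂ) (ha : 0 < a) (hz : 0 < z.re) :
    IntegrableOn (fun t : ℝ => ((t ^ (a - 1) : ℝ) : ℂ) * Complex.exp (-(z * t))) (Set.Ioi 0) := by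
  refine Integrable.mono' (aux_int a z.re ha hz) (aux_meas a z) ?_
  filter_upwards [ae_restrict_mem measurableSet_Ioi] with t ht
  rw [aux_norm a z t ht]

lemma aux_diff (a : ℝ) (ha : 0 < a) (z : ℂ) (hz : 0 < z.re) :
    DifferentiableAt ℂ (fun z : ℂ => ∫ t in Set.Ioi (0 : ℝ),
      ((t ^ (a - 1) : ℝ) : ℂ) * Complex.exp (-(z * t))) z := by
  have hs : {w : ℂ | z.re / 2 < w.re} ∈ 𝓝 z :=
    (isOpen_lt continuous_const Complex.continuous_re).mem_nhds (by simp; linarith)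
  refine (hasDerivAt_integral_of_dominated_loc_of_deriv_le (𝕜 := ℂ) (μ := volume.restrict (Set.Ioi (0:ℝ)))
    (F := fun (z : ℂ) (t : ℝ) => ((t ^ (a - 1) : ℝ) : ℂ) * Complex.exp (-(z * t)))
    (F' := fun (z : ℂ) (t : ℝ) => ((t ^ (a - 1) : ℝ) : ℂ) * (Complex.exp (-(z * t)) * (-t)))
    (bound := fun t => t ^ (a + 1 - 1) * Real.exp (-(z.re / 2 * t)))
    hs ?_ ?_ ?_ ?_ ?_ ?_).2.differentiableAt
  · exact Eventually.of_forall fun w => aux_meas a w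
  · exact aux_intC a z ha hz
  · apply Measurable.aestronglyMeasurable
    fun_prop
  · filter_upwards [ae_restrict_mem measurableSet_Ioi] with t ht w hw
    have ht : 0 < t := ht
    rw [← mul_assoc, norm_mul, aux_norm a w t ht]
    rw [norm_neg, Complex.norm_real, Real.norm_of_nonneg ht.le, Real.rpow_sub_one ht.ne', add_sub_cancel_right]
    have : Real.exp (-(w.re * t)) ≤ Real.exp (-(z.re / 2 * t)) := by
      apply Real.exp_le_exp.2
      have : z.re / 2 < w.re := hw
      nlinarith
    have h2 : t ^ a / t * Real.exp (-(w.re * t)) * t = t ^ a * Real.exp (-(w.re * t)) := by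
      field_simp
    rw [h2]
    gcongr
  · exact aux_int (a + 1) _ (by linarith) (by linarith)
  · filter_upwards with t w hw
    refine HasDerivAt.const_mul _ (HasDerivAt.cexp ?_)
    have := ((hasDerivAt_id w).mul_const (t : ℂ)).neg
    rw [one_mul] at this
    exact this

lemma gamma_int (a : ℝ) (ha : 0 < a) (z : ℂ) (hz : 0 < z.re) :
    ∫ t in Set.Ioi (0 : ℝ), ((t ^ (a - 1) : ℝ) : ℂ) * Complex.exp (-(z * t))
      = z ^ (-(a : ℂ)) * (Real.Gamma a : ℂ) := by
  have hU : IsOpen {w : ℂ | 0 < w.re} := isOpen_lt continuous_const Complex.continuous_re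
  have hf : AnalyticOnNhd ℂ (fun z : ℂ => ∫ t in Set.Ioi (0 : ℝ),
      ((t ^ (a - 1) : ℝ) : ℂ) * Complex.exp (-(z * t))) {w : ℂ | 0 < w.re} := by
    apply DifferentiableOn.analyticOnNhd _ hU
    intro w hw
    exact (aux_diff a ha w hw).differentiableWithinAt
  have hg : AnalyticOnNhd ℂ (fun z : ℂ => z ^ (-(a : ℂ)) * (Real.Gamma a : ℂ)) {w : ℂ | 0 < w.re} := by
    apply DifferentiableOn.analyticOnNhd _ hU
    intro w hw
    apply DifferentiableAt.differentiableWithinAt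
    apply DifferentiableAt.mul_const
    exact (differentiableAt_id).cpow_const (Or.inl hw)
  have hpre : IsPreconnected {w : ℂ | 0 < w.re} := (convex_halfSpace_re_gt 0).isPreconnected
  refine hf.eqOn_of_preconnected_of_frequently_eq hg hpre (z₀ := 1) (by simp) ?_ hz
  have ht : Tendsto (fun x : ℝ => (x : ℂ)) (𝓝[≠] 1) (𝓝[≠] 1) := by
    refine tendsto_nhdsWithin_of_tendsto_nhds_of_eventually_within _ ?_ ?_
    · exact (Complex.continuous_ofReal.tendsto' 1 1 (by simp)).mono_left nhdsWithin_le_nhds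
    · filter_upwards [self_mem_nhdsWithin] with x hx
      simpa using hx
  refine ht.frequently (Eventually.frequently ?_)
  have : ∀ᶠ x : ℝ in 𝓝[≠] 1, 0 < x := nhdsWithin_le_nhds (lt_mem_nhds one_pos)
  filter_upwards [this] with x hx
  have h := Real.integral_rpow_mul_exp_neg_mul_Ioi ha hx
  have h' := congrArg (fun y : ℝ => (y : ℂ)) h
  rw [← integral_complex_ofReal] at h'
  push_cast at h' ⊢
  rw [h', Complex.ofReal_cpow (by positivity)]
  congr 1
  rw [one_div, Complex.ofReal_inv, Complex.inv_cpow, Complex.cpow_neg]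
  rw [Complex.arg_ofReal_of_nonneg hx.le]; exact Real.pi_pos.ne

lemma exp_re_pos (θ : ℝ) (h1 : -(π / 2) < θ) (h2 : θ < π / 2) :
    0 < (Complex.exp (θ * Complex.I)).re := by
  rw [Complex.exp_ofReal_mul_I_re]
  exact Real.cos_pos_of_mem_Ioo ⟨h1, h2⟩

lemma gamma_polar (a b θ : ℝ) (ha : 0 < a) (hb : 0 < b) (h1 : -(π / 2) < θ) (h2 : θ < π / 2) :
    ∫ t in Set.Ioi (0 : ℝ), ((t ^ (a - 1) : ℝ) : ℂ) * Complex.exp (-(b * Complex.exp (θ * Complex.I) * t))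
      = ((b ^ (-a) * Real.Gamma a : ℝ) : ℂ) * Complex.exp (-(a * θ) * Complex.I) := by
  have hc := exp_re_pos θ h1 h2
  rw [gamma_int a ha]
  · have e1 : (b : ℂ) * Complex.exp (θ * Complex.I) = Complex.exp (Real.log b + θ * Complex.I) := by
      rw [Complex.exp_add, ← Complex.ofReal_exp, Real.exp_log hb]
    rw [Complex.cpow_def_of_ne_zero (by rw [e1]; exact Complex.exp_ne_zero _), e1, Complex.log_exp
      (by simp; linarith [Real.pi_pos]) (by simp; linarith [Real.pi_pos])]
    rw [Real.rpow_def_of_pos hb]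
    push_cast
    rw [mul_right_comm, ← Complex.exp_add]
    congr 2
    ring
  · rw [Complex.re_ofReal_mul]; positivity

lemma young (α R b : ℝ) (h0 : 0 < α) (h1 : α < 1) (hR : 0 ≤ R) (hb : 0 < b) :
    ∃ C : ℝ, ∀ t : ℝ, 0 < t → R * t ^ α ≤ b * t + C := by
  have h := (tendsto_rpow_atTop (y := 1 - α) (by linarith)).eventually_ge_atTop (R / b)
  obtain ⟨T, hT⟩ := eventually_atTop.1 h
  refine ⟨R * (max T 0) ^ α, fun t ht => ?_⟩
  rcases le_total t (max T 0) with h | h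
  · have : R * t ^ α ≤ R * (max T 0) ^ α := by gcongr
    nlinarith [mul_pos hb ht]
  · have h3 := hT t (le_trans (le_max_left _ _) h)
    rw [div_le_iff₀ hb] at h3
    have h4 : t ^ (1 - α) * t ^ α = t := by
      rw [← Real.rpow_add ht]; simp
    have : 0 ≤ R * (max T 0) ^ α := by positivity
    have h5 : R * t ^ α ≤ t ^ (1 - α) * b * t ^ α := by gcongr
    have h6 : t ^ (1 - α) * b * t ^ α = b * t := by rw [mul_right_comm, h4, mul_comm]
    linarith

lemma int_dom (α R b : ℝ) (h0 : 0 < α) (h1 : α < 1) (hR : 0 ≤ R) (hb : 0 < b) :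
    IntegrableOn (fun t : ℝ => t ^ (α - 1) * Real.exp (-(b * t)) * Real.exp (R * t ^ α)) (Set.Ioi 0) := by
  obtain ⟨C, hC⟩ := young α R (b / 2) h0 h1 hR (by linarith)
  refine Integrable.mono' ((aux_int α (b / 2) h0 (by linarith)).mul_const (Real.exp C)) ?_ ?_
  · apply Measurable.aestronglyMeasurable
    fun_prop
  · filter_upwards [ae_restrict_mem measurableSet_Ioi] with t ht
    have ht : 0 < t := ht
    rw [Real.norm_of_nonneg (by positivity), mul_assoc, mul_assoc, ← Real.exp_add, ← Real.exp_add]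
    refine mul_le_mul_of_nonneg_left (Real.exp_le_exp.2 ?_) (by positivity)
    linarith [hC t ht]

noncomputable def GG (α φ r t : ℝ) : ℂ :=
  ((t ^ (α - 1) : ℝ) : ℂ) * Complex.exp (-(Complex.exp ((φ - π : ℝ) * Complex.I) * t)) *
    (Complex.exp ((α * φ : ℝ) * Complex.I) *
      Complex.exp (-(r * Complex.exp ((α * φ : ℝ) * Complex.I) * (t ^ α : ℝ))))

lemma refl_sin (a : ℝ) (ha : 0 < a) : Real.Gamma a * Real.sin (π * a) / π = (Real.Gamma (1 - a))⁻¹ := by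
  have h := Real.Gamma_mul_Gamma_one_sub a
  have hg := (Real.Gamma_pos_of_pos ha).ne'
  by_cases hs : Real.sin (π * a) = 0
  · rw [hs, div_zero] at h
    have : Real.Gamma (1 - a) = 0 := by simpa [hg] using h
    simp [hs, this]
  · have hn : Real.Gamma (1 - a) ≠ 0 := by
      intro h0
      rw [h0, mul_zero] at h
      exact (div_ne_zero Real.pi_ne_zero hs) h.symm
    rw [eq_div_iff hs] at h
    rw [div_eq_iff Real.pi_ne_zero, inv_mul_eq_div, eq_div_iff hn]
    linarith

lemma hs_congr {E : Type*} [AddCommMonoid E] [TopologicalSpace E] {f g : ℕ → E} {x : E}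
    (h : ∀ n, f n = g n) (hg : HasSum g x) : HasSum f x := by
  rw [funext h]; exact hg

lemma rep (α φ r : ℝ) (h0 : 0 < α) (h1 : α < 1) (hφ : π / 2 < φ) (hφ' : φ < π) :
    HasSum (fun n : ℕ => (-r) ^ n / (n.factorial * Real.Gamma (-α * n + (1 - α))))
      ((∫ t in Set.Ioi (0 : ℝ), GG α φ r t).im / π) := by
  have hc := exp_re_pos (φ - π) (by linarith) (by linarith [Real.pi_pos])
  set κ := Complex.exp ((α * φ : ℝ) * Complex.I) with hκ
  set c := Complex.exp ((φ - π : ℝ) * Complex.I) with hcd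
  have hκn : ‖κ‖ = 1 := by rw [hκ]; exact Complex.norm_exp_ofReal_mul_I _
  have hsumR : ∀ x : ℝ, HasSum (fun n : ℕ => x ^ n / n.factorial) (Real.exp x) := fun x => by
    rw [Real.exp_eq_exp_ℝ]; exact NormedSpace.expSeries_div_hasSum_exp x
  have hsumC : ∀ x : ℂ, HasSum (fun n : ℕ => x ^ n / n.factorial) (Complex.exp x) := fun x => by
    rw [Complex.exp_eq_exp_ℂ]; exact NormedSpace.expSeries_div_hasSum_exp x
  have key := hasSum_integral_of_dominated_convergence (μ := volume.restrict (Set.Ioi (0:ℝ)))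
    (F := fun (n : ℕ) (t : ℝ) => (κ ^ (n + 1) * (((-r) ^ n / n.factorial : ℝ) : ℂ)) *
      (((t ^ (α * (n + 1) - 1) : ℝ) : ℂ) * Complex.exp (-(((1 : ℝ) : ℂ) * c * t))))
    (f := GG α φ r)
    (fun n t => (t ^ (α - 1) * Real.exp (-(c.re * t))) * ((|r| * t ^ α) ^ n / n.factorial)) ?_ ?_ ?_ ?_ ?_
  · have key2 := (Complex.hasSum_im key).div_const π
    refine hs_congr (fun n => ?_) key2
    have ha : 0 < α * (n + 1) := by positivity
    rw [integral_const_mul, gamma_polar _ 1 (φ - π) ha one_pos (by linarith) (by linarith [Real.pi_pos]), hκ,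
      ← Complex.exp_nat_mul]
    have e : Complex.exp (((n + 1 : ℕ) : ℂ) * ((α * φ : ℝ) * Complex.I)) * (((-r) ^ n / n.factorial : ℝ) : ℂ) *
        (((1 ^ (-(α * (n + 1))) * Real.Gamma (α * (n + 1)) : ℝ) : ℂ) *
          Complex.exp (-(((α * (n + 1) : ℝ) : ℂ) * ((φ - π : ℝ) : ℂ)) * Complex.I)) =
        (((-r) ^ n / n.factorial * Real.Gamma (α * (n + 1)) : ℝ) : ℂ) *
          Complex.exp ((π * (α * (n + 1)) : ℝ) * Complex.I) := by
      have : Complex.exp ((π * (α * (n + 1)) : ℝ) * Complex.I) =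
        Complex.exp (((n + 1 : ℕ) : ℂ) * ((α * φ : ℝ) * Complex.I)) *
          Complex.exp (-(((α * (n + 1) : ℝ) : ℂ) * ((φ - π : ℝ) : ℂ)) * Complex.I) := by
        rw [← Complex.exp_add]
        congr 1
        push_cast
        ring
      rw [this, Real.one_rpow]
      push_cast
      ring
    rw [e, Complex.im_ofReal_mul, Complex.exp_ofReal_mul_I_im]
    have h3 := refl_sin _ ha
    rw [show -α * n + (1 - α) = 1 - α * (n + 1) by ring, div_mul_eq_div_mul_one_div, one_div, ← h3]
    ring
  · intro n
    apply Measurable.aestronglyMeasurable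
    fun_prop
  · intro n
    filter_upwards [ae_restrict_mem measurableSet_Ioi] with t ht
    have ht : 0 < t := ht
    have e : t ^ (α * (n + 1) - 1) = t ^ (α - 1) * (t ^ α) ^ n := by
      rw [← Real.rpow_natCast, ← Real.rpow_mul ht.le, ← Real.rpow_add ht]; congr 1; ring
    rw [norm_mul, aux_norm _ _ _ ht, norm_mul, norm_pow, hκn, e, Complex.norm_real, norm_div, norm_pow, norm_neg,
      Real.norm_eq_abs, Real.norm_of_nonneg (by positivity : (0:ℝ) ≤ n.factorial)]
    apply le_of_eq
    simp
    ring
  · filter_upwards with t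
    exact (hsumR _).summable.mul_left _
  · have : (fun t : ℝ => ∑' n : ℕ, (t ^ (α - 1) * Real.exp (-(c.re * t))) * ((|r| * t ^ α) ^ n / n.factorial))
      = fun t : ℝ => t ^ (α - 1) * Real.exp (-(c.re * t)) * Real.exp (|r| * t ^ α) := by
      ext t
      rw [tsum_mul_left, (hsumR _).tsum_eq]
    rw [this]
    exact int_dom α |r| c.re h0 h1 (abs_nonneg r) hc
  · filter_upwards [ae_restrict_mem measurableSet_Ioi] with t ht
    have ht : 0 < t := ht
    have := ((hsumC (-(r * κ * (t ^ α : ℝ)))).mul_left κ).mul_left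
      (((t ^ (α - 1) : ℝ) : ℂ) * Complex.exp (-(c * t)))
    refine hs_congr (fun n => ?_) this
    have e : t ^ (α * (n + 1) - 1) = t ^ (α - 1) * (t ^ α) ^ n := by
      rw [← Real.rpow_natCast, ← Real.rpow_mul ht.le, ← Real.rpow_add ht]; congr 1; ring
    rw [e]
    push_cast
    rw [one_mul, show -((r : ℂ) * κ * ((t ^ α : ℝ) : ℂ)) = (-r) * κ * ((t ^ α : ℝ) : ℂ) by ring, mul_pow, mul_pow]
    ring

lemma wr_eq (α φ r : ℝ) (h0 : 0 < α) (h1 : α < 1) (hφ : π / 2 < φ) (hφ' : φ < π) :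
    wrightFn (-α) (1 - α) (-r) = (∫ t in Set.Ioi (0 : ℝ), GG α φ r t).im / π :=
  (rep α φ r h0 h1 hφ hφ').tsum_eq

lemma wr_cont (α φ : ℝ) (h0 : 0 < α) (h1 : α < 1) (hφ : π / 2 < φ) (hφ' : φ < π) :
    Continuous (fun r => wrightFn (-α) (1 - α) (-r)) := by
  rw [continuous_iff_continuousAt]
  intro x
  have hs : Metric.ball (0 : ℝ) (|x| + 1) ∈ 𝓝 x := Metric.isOpen_ball.mem_nhds (by simp)
  refine ContinuousOn.continuousAt ?_ hs
  unfold wrightFn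
  refine continuousOn_tsum (u := fun n : ℕ =>
    ‖(-(|x| + 1)) ^ n / (n.factorial * Real.Gamma (-α * n + (1 - α)))‖) ?_ ?_ ?_
  · intro n
    fun_prop
  · exact (rep α φ (|x| + 1) h0 h1 hφ hφ').summable.norm
  · intro n y hy
    have hy : |y| < |x| + 1 := by simpa using hy
    rw [norm_div, norm_div, norm_pow, norm_pow, norm_neg, norm_neg, Real.norm_eq_abs y,
      Real.norm_of_nonneg (by positivity : 0 ≤ |x| + 1)]
    gcongr

lemma taylor_bd (K : ℕ) (z : ℂ) (hz : z.re ≤ 0) :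
    ‖Complex.exp z - ∑ m ∈ Finset.range K, z ^ m / m.factorial‖ ≤ (Real.exp 1 + 1 + K) * ‖z‖ ^ K := by
  rcases le_total ‖z‖ 1 with h | h
  · refine (Complex.norm_exp_sub_sum_le_norm_mul_exp z K).trans ?_
    rw [mul_comm]
    gcongr
    have : Real.exp ‖z‖ ≤ Real.exp 1 := Real.exp_le_exp.2 h
    have : (0:ℝ) ≤ K := by positivity
    linarith
  · refine (norm_sub_le _ _).trans ?_
    have e1 : ‖Complex.exp z‖ ≤ 1 := by
      rw [Complex.norm_exp]; exact Real.exp_le_one_iff.2 hz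
    have e2 : ‖∑ m ∈ Finset.range K, z ^ m / m.factorial‖ ≤ K * ‖z‖ ^ K := by
      refine (norm_sum_le _ _).trans ?_
      have : ∀ m ∈ Finset.range K, ‖z ^ m / (m.factorial : ℂ)‖ ≤ ‖z‖ ^ K := by
        intro m hm
        rw [norm_div, norm_pow, Complex.norm_natCast]
        have h1 : (1:ℝ) ≤ m.factorial := by exact_mod_cast m.factorial_pos
        calc ‖z‖ ^ m / m.factorial ≤ ‖z‖ ^ m := div_le_self (by positivity) h1
          _ ≤ ‖z‖ ^ K := pow_le_pow_right₀ h (Finset.mem_range.1 hm).le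
      refine (Finset.sum_le_sum this).trans ?_
      simp
    have e3 : 1 ≤ ‖z‖ ^ K := one_le_pow₀ h
    have := Real.exp_pos 1
    nlinarith

noncomputable def PP (α φ r : ℝ) (k : ℕ) (t : ℝ) : ℂ :=
  ((t ^ (α - 1) : ℝ) : ℂ) * ((-(Complex.exp ((φ - π : ℝ) * Complex.I) * t)) ^ k / k.factorial) *
    (Complex.exp ((α * φ : ℝ) * Complex.I) *
      Complex.exp (-(r * Complex.exp ((α * φ : ℝ) * Complex.I) * (t ^ α : ℝ))))

lemma tail_norm (α φ r t : ℝ) :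
    ‖(Complex.exp ((α * φ : ℝ) * Complex.I) *
      Complex.exp (-(r * Complex.exp ((α * φ : ℝ) * Complex.I) * (t ^ α : ℝ))))‖ =
      Real.exp (-(r * Real.cos (α * φ)) * t ^ α) := by
  rw [norm_mul, Complex.norm_exp_ofReal_mul_I, one_mul, Complex.norm_exp, Complex.neg_re,
    Complex.re_mul_ofReal, Complex.re_ofReal_mul, Complex.exp_ofReal_mul_I_re, neg_mul]

lemma PP_norm (α φ r : ℝ) (k : ℕ) (t : ℝ) (ht : 0 < t) :
    ‖PP α φ r k t‖ = (1 / k.factorial) * (t ^ (k + α - 1) * Real.exp (-(r * Real.cos (α * φ)) * t ^ α)) := by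
  unfold PP
  rw [norm_mul, tail_norm, norm_mul, norm_div, norm_pow, norm_neg, norm_mul, Complex.norm_exp_ofReal_mul_I,
    Complex.norm_real, Complex.norm_real, Complex.norm_natCast, Real.norm_of_nonneg ht.le,
    Real.norm_of_nonneg (by positivity), add_sub_assoc, Real.rpow_add ht, Real.rpow_natCast]
  ring

lemma PP_int (α φ r : ℝ) (k : ℕ) (h0 : 0 < α) (hr : 0 < r) (hk : 0 < Real.cos (α * φ)) :
    IntegrableOn (PP α φ r k) (Set.Ioi 0) := by
  refine Integrable.mono' ((integrableOn_rpow_mul_exp_neg_mul_rpow (p := α) (s := k + α - 1)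
    (b := r * Real.cos (α * φ)) (by have : (0:ℝ) ≤ k := by positivity
                                    linarith) h0 (by positivity)).const_mul (1 / (k.factorial : ℝ))) ?_ ?_
  · apply Measurable.aestronglyMeasurable
    unfold PP
    fun_prop
  · filter_upwards [ae_restrict_mem measurableSet_Ioi] with t ht
    rw [PP_norm _ _ _ _ _ ht]

lemma PP_im (α φ r : ℝ) (k : ℕ) (h0 : 0 < α) (hr : 0 < r) (hφ0 : 0 < φ) (hk : α * φ < π / 2) :
    (∫ t in Set.Ioi (0 : ℝ), PP α φ r k t).im = 0 := by
  have hp : 0 < α * φ := by positivity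
  have h := integral_comp_rpow_Ioi (fun y : ℝ => (((y ^ ((k / α + 1) - 1) : ℝ) : ℂ) *
    Complex.exp (-(r * Complex.exp ((α * φ : ℝ) * Complex.I) * y)))) h0.ne'
  rw [gamma_polar (k / α + 1) r (α * φ) (by positivity) hr (by linarith [Real.pi_pos]) hk] at h
  have e : ∫ t in Set.Ioi (0 : ℝ), PP α φ r k t = ∫ t in Set.Ioi (0 : ℝ),
      (Complex.exp ((φ * (k + α) : ℝ) * Complex.I) * ((1 / (α * k.factorial) : ℝ) : ℂ)) *
      ((|α| * t ^ (α - 1)) • ((((t ^ α) ^ ((k / α + 1) - 1) : ℝ) : ℂ) *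
    Complex.exp (-(r * Complex.exp ((α * φ : ℝ) * Complex.I) * (t ^ α : ℝ))))) := by
    refine setIntegral_congr_fun measurableSet_Ioi fun t ht => ?_
    have ht : 0 < t := ht
    have e1 : (t ^ α) ^ ((k / α + 1) - 1) = t ^ k := by
      rw [← Real.rpow_mul ht.le, ← Real.rpow_natCast]
      congr 1
      field_simp
      ring
    have e2 : -(Complex.exp ((φ - π : ℝ) * Complex.I)) = Complex.exp (φ * Complex.I) := by
      rw [Complex.ofReal_sub, sub_mul, Complex.exp_sub, Complex.exp_pi_mul_I, div_neg, div_one, neg_neg]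
    have e3 : Complex.exp ((φ * (k + α) : ℝ) * Complex.I) =
        Complex.exp (φ * Complex.I) ^ k * Complex.exp ((α * φ : ℝ) * Complex.I) := by
      rw [← Complex.exp_nat_mul, ← Complex.exp_add]
      congr 1
      push_cast
      ring
    simp only [PP]
    rw [e1, e3, ← neg_mul, e2, abs_of_pos h0, mul_pow, Complex.real_smul]
    have : (α : ℂ) ≠ 0 := by exact_mod_cast h0.ne'
    have : (k.factorial : ℂ) ≠ 0 := by exact_mod_cast k.factorial_ne_zero
    push_cast
    field_simp
  rw [e, integral_const_mul, h]
  have e4 : Complex.exp ((φ * (k + α) : ℝ) * Complex.I) *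
      Complex.exp (-(((k / α + 1 : ℝ) : ℂ) * ((α * φ : ℝ) : ℂ)) * Complex.I) = 1 := by
    rw [← Complex.exp_add, Complex.exp_eq_one_iff]
    refine ⟨0, ?_⟩
    have : (α : ℂ) ≠ 0 := by exact_mod_cast h0.ne'
    push_cast
    field_simp
    ring
  generalize Complex.exp ((φ * (k + α) : ℝ) * Complex.I) = A at *
  generalize Complex.exp (-(((k / α + 1 : ℝ) : ℂ) * ((α * φ : ℝ) : ℂ)) * Complex.I) = B at *
  rw [show ∀ x y : ℂ, A * x * (y * B) = A * B * (x * y) from fun x y => by ring, e4, one_mul,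
    ← Complex.ofReal_mul, Complex.ofReal_im]

lemma GG_norm (α φ r t : ℝ) (ht : 0 < t) : ‖GG α φ r t‖ =
    t ^ (α - 1) * Real.exp (-(Real.cos (φ - π) * t)) * Real.exp (-(r * Real.cos (α * φ)) * t ^ α) := by
  unfold GG
  rw [norm_mul, tail_norm, aux_norm _ _ _ ht, Complex.exp_ofReal_mul_I_re]

lemma GG_int (α φ r : ℝ) (h0 : 0 < α) (h1 : α < 1) (hφ : π / 2 < φ) (hφ' : φ < π) :
    IntegrableOn (GG α φ r) (Set.Ioi 0) := by
  have hc : 0 < Real.cos (φ - π) := Real.cos_pos_of_mem_Ioo ⟨by linarith, by linarith [Real.pi_pos]⟩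
  refine Integrable.mono' (int_dom α |r| _ h0 h1 (abs_nonneg r) hc) ?_ ?_
  · apply Measurable.aestronglyMeasurable
    unfold GG
    fun_prop
  · filter_upwards [ae_restrict_mem measurableSet_Ioi] with t ht
    have ht : 0 < t := ht
    rw [GG_norm _ _ _ _ ht]
    gcongr
    have : |r * Real.cos (α * φ)| ≤ |r| := by
      rw [abs_mul]; exact mul_le_of_le_one_right (abs_nonneg _) (Real.abs_cos_le_one _)
    linarith [neg_abs_le (r * Real.cos (α * φ))]

lemma decay (α φ : ℝ) (K : ℕ) (h0 : 0 < α) (h1 : α < 1) (hφ : π / 2 < φ) (hφ' : φ < π)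
    (hk : α * φ < π / 2) : ∃ C : ℝ, ∀ r : ℝ, 0 < r →
    |wrightFn (-α) (1 - α) (-r)| ≤ C * r ^ (-((K + α) / α)) := by
  have hφ0 : 0 < φ := by linarith [Real.pi_pos]
  have hp : 0 < α * φ := by positivity
  have hc : 0 < Real.cos (φ - π) := Real.cos_pos_of_mem_Ioo ⟨by linarith, by linarith [Real.pi_pos]⟩
  have hcos : 0 < Real.cos (α * φ) := Real.cos_pos_of_mem_Ioo ⟨by linarith [Real.pi_pos], hk⟩
  refine ⟨(Real.exp 1 + 1 + K) * (Real.cos (α * φ) ^ (-((K + α) / α)) * (1 / α) * Real.Gamma ((K + α) / α)) / π, fun r hr => ?_⟩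
  have hPs : IntegrableOn (fun t => ∑ k ∈ Finset.range K, PP α φ r k t) (Set.Ioi 0) :=
    integrable_finsetSum _ fun k _ => PP_int α φ r k h0 hr hcos
  have e1 : (∫ t in Set.Ioi (0 : ℝ), GG α φ r t).im =
      (∫ t in Set.Ioi (0 : ℝ), (GG α φ r t - ∑ k ∈ Finset.range K, PP α φ r k t)).im := by
    rw [integral_sub (GG_int α φ r h0 h1 hφ hφ') hPs,
      integral_finsetSum _ fun k _ => PP_int α φ r k h0 hr hcos, Complex.sub_im, Complex.im_sum,
      Finset.sum_eq_zero fun k _ => PP_im α φ r k h0 hr hφ0 hk, sub_zero]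
  have hI := (integrableOn_rpow_mul_exp_neg_mul_rpow (p := α) (s := K + α - 1)
    (b := r * Real.cos (α * φ)) (by have : (0:ℝ) ≤ K := by positivity
                                    linarith) h0 (by positivity)).const_mul (Real.exp 1 + 1 + K)
  have e2 : ‖∫ t in Set.Ioi (0 : ℝ), (GG α φ r t - ∑ k ∈ Finset.range K, PP α φ r k t)‖ ≤
      ∫ t in Set.Ioi (0 : ℝ), (Real.exp 1 + 1 + K) *
        (t ^ (K + α - 1) * Real.exp (-(r * Real.cos (α * φ)) * t ^ α)) := by
    refine norm_integral_le_of_norm_le hI ?_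
    filter_upwards [ae_restrict_mem measurableSet_Ioi] with t ht
    have ht : 0 < t := ht
    have e3 : GG α φ r t - ∑ k ∈ Finset.range K, PP α φ r k t = ((t ^ (α - 1) : ℝ) : ℂ) *
        (Complex.exp (-(Complex.exp ((φ - π : ℝ) * Complex.I) * t)) - ∑ k ∈ Finset.range K,
          ((-(Complex.exp ((φ - π : ℝ) * Complex.I) * t)) ^ k / k.factorial)) *
        (Complex.exp ((α * φ : ℝ) * Complex.I) *
      Complex.exp (-(r * Complex.exp ((α * φ : ℝ) * Complex.I) * (t ^ α : ℝ)))) := by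
      unfold GG PP
      rw [← Finset.sum_mul, ← Finset.mul_sum, mul_sub, sub_mul]
    rw [e3, norm_mul, tail_norm, norm_mul]
    have e4 := taylor_bd K (-(Complex.exp ((φ - π : ℝ) * Complex.I) * t)) (by
      rw [Complex.neg_re, Complex.re_mul_ofReal, Complex.exp_ofReal_mul_I_re]
      have := mul_pos hc ht
      linarith)
    rw [norm_neg, norm_mul, Complex.norm_exp_ofReal_mul_I, one_mul, Complex.norm_real, Real.norm_of_nonneg ht.le] at e4
    rw [Complex.norm_real, Real.norm_of_nonneg (by positivity), add_sub_assoc, Real.rpow_add ht, Real.rpow_natCast]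
    calc _ ≤ t ^ (α - 1) * ((Real.exp 1 + 1 + K) * t ^ K) * Real.exp (-(r * Real.cos (α * φ)) * t ^ α) := by
          gcongr
      _ = _ := by ring
  rw [integral_const_mul, integral_rpow_mul_exp_neg_mul_rpow h0 (by have : (0:ℝ) ≤ K := by positivity
                                                                    linarith) (by positivity)] at e2
  rw [wr_eq α φ r h0 h1 hφ hφ', e1, abs_div, abs_of_pos Real.pi_pos]
  have e5 := (Complex.abs_im_le_norm _).trans e2
  rw [sub_add_cancel, Real.mul_rpow hr.le hcos.le] at e5
  rw [div_le_iff₀ Real.pi_pos]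
  refine e5.trans (le_of_eq ?_)
  rw [neg_div]
  field_simp

lemma GG_factor (α φ s r t : ℝ) :
    GG α φ r t * ((r ^ (s - 1) : ℝ) : ℂ) =
    (((t ^ (α - 1) : ℝ) : ℂ) * Complex.exp (-(Complex.exp ((φ - π : ℝ) * Complex.I) * t)) *
      Complex.exp ((α * φ : ℝ) * Complex.I)) * (((r ^ (s - 1) : ℝ) : ℂ) *
        Complex.exp (-(((t ^ α : ℝ) : ℂ) * Complex.exp ((α * φ : ℝ) * Complex.I) * r))) := by
  unfold GG
  rw [show (r : ℂ) * Complex.exp ((α * φ : ℝ) * Complex.I) * ((t ^ α : ℝ) : ℂ) =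
    ((t ^ α : ℝ) : ℂ) * Complex.exp ((α * φ : ℝ) * Complex.I) * r by ring]
  ring

lemma fub_int (α φ s : ℝ) (h0 : 0 < α) (hφ : π / 2 < φ) (hφ' : φ < π)
    (hk : α * φ < π / 2) (hs0 : 0 < s) (hs1 : s < 1) :
    Integrable (Function.uncurry fun r t : ℝ => GG α φ r t * ((r ^ (s - 1) : ℝ) : ℂ))
      ((volume.restrict (Set.Ioi 0)).prod (volume.restrict (Set.Ioi 0))) := by
  have hφ0 : 0 < φ := by linarith [Real.pi_pos]
  have hp : 0 < α * φ := by positivity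
  have hc : 0 < Real.cos (φ - π) := Real.cos_pos_of_mem_Ioo ⟨by linarith, by linarith [Real.pi_pos]⟩
  have hcos : 0 < Real.cos (α * φ) := Real.cos_pos_of_mem_Ioo ⟨by linarith [Real.pi_pos], hk⟩
  rw [integrable_prod_iff']
  · constructor
    · filter_upwards [ae_restrict_mem measurableSet_Ioi] with t ht
      have ht : 0 < t := ht
      simp only [Function.uncurry_apply_pair, GG_factor]
      refine Integrable.const_mul (aux_intC s _ hs0 ?_) _
      rw [Complex.re_ofReal_mul, Complex.exp_ofReal_mul_I_re]
      positivity
    · have hI := (aux_int (α * (1 - s)) (Real.cos (φ - π)) (mul_pos h0 (by linarith)) hc).mul_const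
        (Real.cos (α * φ) ^ (-s) * Real.Gamma s)
      refine hI.congr ?_
      filter_upwards [ae_restrict_mem measurableSet_Ioi] with t ht
      have ht : 0 < t := ht
      have e : ∫ r in Set.Ioi (0 : ℝ), ‖Function.uncurry (fun r t : ℝ => GG α φ r t * ((r ^ (s - 1) : ℝ) : ℂ)) (r, t)‖ =
          ∫ r in Set.Ioi (0 : ℝ), (t ^ (α - 1) * Real.exp (-(Real.cos (φ - π) * t))) *
            (r ^ (s - 1) * Real.exp (-((t ^ α * Real.cos (α * φ)) * r))) := by
        refine setIntegral_congr_fun measurableSet_Ioi fun r hr => ?_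
        have hr : 0 < r := hr
        simp only [Function.uncurry_apply_pair]
        rw [GG_factor, norm_mul, aux_norm _ _ _ hr, norm_mul, aux_norm _ _ _ ht, Complex.norm_exp_ofReal_mul_I,
          Complex.exp_ofReal_mul_I_re, Complex.re_ofReal_mul, Complex.exp_ofReal_mul_I_re, mul_one]
      rw [e, integral_const_mul, Real.integral_rpow_mul_exp_neg_mul_Ioi hs0 (by positivity), one_div,
        Real.inv_rpow (by positivity), ← Real.rpow_neg (by positivity), Real.mul_rpow (by positivity) hcos.le,
        ← Real.rpow_mul ht.le, show α * (1 - s) - 1 = (α - 1) + α * -s by ring, Real.rpow_add ht]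
      ring
  · apply Measurable.aestronglyMeasurable
    unfold GG Function.uncurry
    fun_prop

lemma base (α φ s : ℝ) (h0 : 0 < α) (h1 : α < 1) (hφ : π / 2 < φ) (hφ' : φ < π)
    (hk : α * φ < π / 2) (hs0 : 0 < s) (hs1 : s < 1) :
    ∫ r in Set.Ioi (0 : ℝ), wrightFn (-α) (1 - α) (-r) * r ^ (s - 1) =
      Real.Gamma s * (Real.Gamma (1 - α * (1 - s)))⁻¹ := by
  have hφ0 : 0 < φ := by linarith [Real.pi_pos]
  have hp : 0 < α * φ := by positivity
  have ha : 0 < α * (1 - s) := mul_pos h0 (by linarith)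
  have hF := fub_int α φ s h0 hφ hφ' hk hs0 hs1
  have e1 : ∀ r : ℝ, wrightFn (-α) (1 - α) (-r) * r ^ (s - 1) =
      (∫ t in Set.Ioi (0 : ℝ), GG α φ r t * ((r ^ (s - 1) : ℝ) : ℂ)).im / π := by
    intro r
    rw [wr_eq α φ r h0 h1 hφ hφ', integral_mul_const, Complex.im_mul_ofReal]
    ring
  have e2 : ∫ r in Set.Ioi (0 : ℝ), (∫ t in Set.Ioi (0 : ℝ), GG α φ r t * ((r ^ (s - 1) : ℝ) : ℂ)).im =
      (∫ r in Set.Ioi (0 : ℝ), ∫ t in Set.Ioi (0 : ℝ), GG α φ r t * ((r ^ (s - 1) : ℝ) : ℂ)).im :=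
    Complex.imCLM.integral_comp_comm hF.integral_prod_left
  simp_rw [e1]
  rw [integral_div, e2, integral_integral_swap hF]
  have e3 : ∫ t in Set.Ioi (0 : ℝ), ∫ r in Set.Ioi (0 : ℝ), GG α φ r t * ((r ^ (s - 1) : ℝ) : ℂ) =
      ∫ t in Set.Ioi (0 : ℝ), ((Real.Gamma s : ℂ) * (Complex.exp ((α * φ : ℝ) * Complex.I) *
        Complex.exp (-(s * (α * φ : ℝ)) * Complex.I))) *
        (((t ^ (α * (1 - s) - 1) : ℝ) : ℂ) *
          Complex.exp (-(((1 : ℝ) : ℂ) * Complex.exp ((φ - π : ℝ) * Complex.I) * t))) := by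
    refine setIntegral_congr_fun measurableSet_Ioi fun t ht => ?_
    have ht : 0 < t := ht
    simp only [GG_factor]
    rw [integral_const_mul, gamma_polar s _ (α * φ) hs0 (by positivity) (by linarith [Real.pi_pos]) hk,
      ← Real.rpow_mul ht.le, show α * (1 - s) - 1 = (α - 1) + α * -s by ring, Real.rpow_add ht]
    push_cast
    ring_nf
  rw [e3, integral_const_mul, gamma_polar _ 1 (φ - π) ha one_pos (by linarith) (by linarith [Real.pi_pos]),
    ← refl_sin _ ha]
  have e4 : Complex.exp ((α * φ : ℝ) * Complex.I) * Complex.exp (-(s * (α * φ : ℝ)) * Complex.I) *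
      Complex.exp (-((α * (1 - s) : ℝ) * (φ - π : ℝ)) * Complex.I) =
      Complex.exp ((π * (α * (1 - s)) : ℝ) * Complex.I) := by
    rw [← Complex.exp_add, ← Complex.exp_add]
    congr 1
    push_cast
    ring
  rw [show ∀ a b x y : ℂ, a * b * (x * y) = (a * x) * (b * y) from fun a b x y => by ring, e4, Real.one_rpow,
    one_mul, ← Complex.ofReal_mul, Complex.im_ofReal_mul, Complex.exp_ofReal_mul_I_im]
  ring

theorem stmt7 (α ν : ℝ) (hα : α ∈ Set.Ioo (0 : ℝ) 1) (hν : -1 < ν) :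
    ∫ r in Set.Ioi (0 : ℝ), wrightFn (-α) (1 - α) (-r) * r ^ ν =
      Real.Gamma (ν + 1) / Real.Gamma (ν * α + 1) := by
  obtain ⟨h0, h1⟩ := hα
  obtain ⟨φ, hφ, hφ', hk⟩ : ∃ φ : ℝ, π / 2 < φ ∧ φ < π ∧ α * φ < π / 2 := by
    have := Real.pi_pos
    refine ⟨π / (1 + α), ?_, ?_, ?_⟩
    · apply div_lt_div_of_pos_left <;> linarith
    · apply div_lt_self <;> linarith
    · rw [← mul_div_assoc, div_lt_div_iff₀ (by linarith) (by norm_num)]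
      nlinarith
  set f : ℝ → ℂ := fun r => ((wrightFn (-α) (1 - α) (-r) : ℝ) : ℂ) with hf
  have hcont : Continuous f := Complex.continuous_ofReal.comp (wr_cont α φ h0 h1 hφ hφ')
  have hmel : ∀ s : ℝ, mellin f s =
      ((∫ r in Set.Ioi (0 : ℝ), wrightFn (-α) (1 - α) (-r) * r ^ (s - 1) : ℝ) : ℂ) := by
    intro s
    rw [mellin, ← integral_complex_ofReal]
    refine setIntegral_congr_fun measurableSet_Ioi fun t ht => ?_
    have ht : 0 < t := ht
    simp only [hf, smul_eq_mul]
    rw [Complex.ofReal_mul, Complex.ofReal_cpow ht.le]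
    push_cast
    ring
  have hO0 : f =O[𝓝[>] 0] fun x : ℝ => x ^ (-(0 : ℝ)) := by
    simp only [neg_zero, Real.rpow_zero]
    exact (hcont.continuousAt.tendsto.isBigO_one ℝ).mono nhdsWithin_le_nhds
  have hU : IsOpen {w : ℂ | 0 < w.re} := isOpen_lt continuous_const Complex.continuous_re
  have hA : AnalyticOnNhd ℂ (mellin f) {w : ℂ | 0 < w.re} := by
    apply DifferentiableOn.analyticOnNhd _ hU
    intro w hw
    obtain ⟨K, hK⟩ := exists_nat_gt w.re
    obtain ⟨C, hC⟩ := decay α φ K h0 h1 hφ hφ' hk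
    have hO : f =O[atTop] fun x : ℝ => x ^ (-((K + α) / α)) := by
      apply Asymptotics.IsBigO.of_bound C
      filter_upwards [eventually_gt_atTop 0] with r hr
      rw [Real.norm_of_nonneg (by positivity), hf, Complex.norm_real]
      exact hC r hr
    refine (mellin_differentiableAt_of_isBigO_rpow (hcont.locallyIntegrable.locallyIntegrableOn _) hO ?_ hO0
      hw).differentiableWithinAt
    rw [lt_div_iff₀ h0]
    have : 0 < w.re := hw
    nlinarith
  have hB : AnalyticOnNhd ℂ (fun s : ℂ => Complex.Gamma s * (Complex.Gamma (1 - α * (1 - s)))⁻¹)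
      {w : ℂ | 0 < w.re} := by
    apply DifferentiableOn.analyticOnNhd _ hU
    intro w hw
    apply DifferentiableAt.differentiableWithinAt
    refine DifferentiableAt.mul (Complex.differentiableAt_Gamma _ ?_) ?_
    · intro m hm
      have : 0 < w.re := hw
      rw [hm] at this
      simp at this
      have : (0:ℝ) ≤ m := by positivity
      linarith
    · have hd : Differentiable ℂ (fun s : ℂ => 1 - (α : ℂ) * (1 - s)) := by fun_prop
      exact (Complex.differentiable_one_div_Gamma.comp hd) w
  have hpre : IsPreconnected {w : ℂ | 0 < w.re} := (convex_halfSpace_re_gt 0).isPreconnected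
  have hEq := hA.eqOn_of_preconnected_of_frequently_eq hB hpre (z₀ := ((1 / 2 : ℝ) : ℂ)) (by
    rw [Set.mem_ofPred_eq, Complex.ofReal_re]; norm_num) (by
    have ht : Tendsto (fun x : ℝ => (x : ℂ)) (𝓝[≠] (1 / 2)) (𝓝[≠] ((1 / 2 : ℝ) : ℂ)) := by
      refine tendsto_nhdsWithin_of_tendsto_nhds_of_eventually_within _ ?_ ?_
      · exact (Complex.continuous_ofReal.tendsto _).mono_left nhdsWithin_le_nhds
      · filter_upwards [self_mem_nhdsWithin] with x hx
        simp only [Set.mem_compl_iff, Set.mem_singleton_iff, Complex.ofReal_inj] at hx ⊢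
        exact hx
    refine ht.frequently (Eventually.frequently ?_)
    have : ∀ᶠ x : ℝ in 𝓝[≠] (1 / 2), x ∈ Set.Ioo (0 : ℝ) 1 :=
      nhdsWithin_le_nhds (Ioo_mem_nhds (by norm_num) (by norm_num))
    filter_upwards [this] with x hx
    rw [hmel, base α φ x h0 h1 hφ hφ' hk hx.1 hx.2]
    push_cast [← Complex.Gamma_ofReal]
    rfl)
  have hfin := hEq (x := ((ν + 1 : ℝ) : ℂ)) (by rw [Set.mem_ofPred_eq, Complex.ofReal_re]; linarith)
  rw [hmel] at hfin
  simp only [add_sub_cancel_right] at hfin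
  apply Complex.ofReal_injective
  rw [hfin, Complex.ofReal_div, ← Complex.Gamma_ofReal, ← Complex.Gamma_ofReal, div_eq_mul_inv]
  congr 3
  push_cast
  ring
end

section
/- Let α ∈ (0,1). There exist κ > 0 and σ > 0 such that for all t > 0, 0 < W_{-α,1-α}(-t) ≤ κ e^{-σ t^{1/(1-α)}}. -/
open Real Filter Topology

open MeasureTheory

lemma wr_integrable (α : ℝ) (h0 : 0 < α) (h1 : α < 1) (t : ℝ) (ht : 0 < t) :
    IntegrableOn (fun r : ℝ => rexp (-r) * r ^ (α - 1) * rexp (t * r ^ α)) (Set.Ioi 0) := by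
  set m : ℝ := (t * 2 ^ α) ^ (1 / (1 - α)) with hm
  have hm0 : 0 < m := by positivity
  have key : ∀ r : ℝ, 0 < r → t * r ^ α ≤ α * (r / 2) + (1 - α) * m := by
    intro r hr
    have := Real.geom_mean_le_arith_mean2_weighted (w₁ := α) (w₂ := 1 - α) (p₁ := r / 2) (p₂ := m)
      h0.le (by linarith) (by positivity) hm0.le (by ring)
    have e : (r / 2) ^ α * m ^ (1 - α) = t * r ^ α := by
      rw [hm, ← Real.rpow_mul (by positivity), one_div_mul_cancel (by linarith), Real.rpow_one,
        Real.div_rpow hr.le (by norm_num)]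
      have : (2:ℝ) ^ α ≠ 0 := by positivity
      field_simp
    linarith
  have hI := (integrableOn_rpow_mul_exp_neg_mul_rpow (p := 1) (s := α - 1) (b := 1 / 2)
    (by linarith) one_pos (by norm_num)).const_mul (rexp ((1 - α) * m))
  refine Integrable.mono' hI ?_ ?_
  · apply Measurable.aestronglyMeasurable
    fun_prop
  · refine (ae_restrict_mem measurableSet_Ioi).mono fun r hr => ?_
    have hr : 0 < r := hr
    rw [Real.norm_of_nonneg (by positivity)]
    have h2 : rexp (-r) * rexp (t * r ^ α) ≤ rexp ((1 - α) * m) * rexp (-(1/2) * r ^ (1:ℝ)) := by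
      rw [← Real.exp_add, ← Real.exp_add, Real.rpow_one]
      apply Real.exp_le_exp.2
      have := key r hr
      nlinarith
    have h3 : 0 ≤ r ^ (α - 1) := by positivity
    nlinarith [mul_le_mul_of_nonneg_left h2 h3]

/-- exponent -/
noncomputable def wrG (α t : ℝ) (w : ℂ) : ℂ :=
  Complex.exp (Complex.exp w - t * Complex.exp (α * w) + α * w)

lemma wrG_ray (α t r : ℝ) (hr : 0 < r) :
    wrG α t (Real.log r + Real.pi * Complex.I) =
      (rexp (-r) * r ^ α : ℝ) * (Complex.exp (α * Real.pi * Complex.I) *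
        Complex.exp (((-t * r ^ α : ℝ) : ℂ) * Complex.exp (α * Real.pi * Complex.I))) := by
  have e1 : Complex.exp (Real.log r + Real.pi * Complex.I) = -r := by
    rw [Complex.exp_add, Complex.exp_pi_mul_I, ← Complex.ofReal_exp, Real.exp_log hr]; ring
  have e2 : Complex.exp (α * (Real.log r + Real.pi * Complex.I)) =
      (r ^ α : ℝ) * Complex.exp (α * Real.pi * Complex.I) := by
    rw [mul_add, Complex.exp_add, Real.rpow_def_of_pos hr, Complex.ofReal_exp]
    push_cast; ring_nf
  rw [wrG, Complex.exp_add, e2, sub_eq_add_neg, Complex.exp_add, e1]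
  push_cast
  ring_nf

lemma wr_term (α t : ℝ) (h0 : 0 < α) (n : ℕ) :
    Real.pi * ((-t) ^ n / (n.factorial * Real.Gamma (-α * n + (1 - α)))) =
    ∫ r in Set.Ioi (0:ℝ), (-t) ^ n / n.factorial * Real.sin (α * Real.pi * (n + 1)) *
      (rexp (-r) * r ^ (α * (n + 1) - 1)) := by
  have hs : 0 < α * (n + 1) := by positivity
  rw [integral_const_mul, ← Real.Gamma_eq_integral hs]
  have hG := Real.Gamma_mul_Gamma_one_sub (α * (n + 1))
  have hp := Real.Gamma_pos_of_pos hs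
  have e : -α * n + (1 - α) = 1 - α * (n + 1) := by ring
  have e' : α * Real.pi * (n + 1) = Real.pi * (α * (n+1)) := by ring
  rw [e, e']
  set S := Real.sin (Real.pi * (α * (n+1)))
  set g := Real.Gamma (α * (n + 1))
  set g' := Real.Gamma (1 - α * (n + 1))
  have hf : (n.factorial : ℝ) ≠ 0 := by positivity
  by_cases hS : S = 0
  · rw [hS, div_zero] at hG
    have : g' = 0 := by
      rcases mul_eq_zero.1 hG with h | h
      · exact absurd h hp.ne'
      · exact h
    rw [this, hS]; simp
  · rw [eq_div_iff hS] at hG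
    have hg' : g' ≠ 0 := by
      intro h; rw [h] at hG; simp at hG; exact Real.pi_ne_zero hG.symm
    rw [← hG]
    field_simp

lemma wr_hasSum (α t r : ℝ) (hr : 0 < r) :
    HasSum (fun n : ℕ => (-t) ^ n / n.factorial * Real.sin (α * Real.pi * (n + 1)) *
      (rexp (-r) * r ^ (α * (n + 1) - 1)))
      ((wrG α t (Real.log r + Real.pi * Complex.I)).im / r) := by
  have h := NormedSpace.expSeries_div_hasSum_exp
    (((-t * r ^ α : ℝ) : ℂ) * Complex.exp (α * Real.pi * Complex.I))
  rw [← Complex.exp_eq_exp_ℂ] at h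
  have h2 := h.mul_left (((rexp (-r) * r ^ α : ℝ) : ℂ) * Complex.exp (α * Real.pi * Complex.I))
  have h3 := (Complex.hasSum_im h2).div_const r
  rw [wrG_ray α t r hr, ← mul_assoc]
  refine h3.congr_fun ?_
  intro n
  have e : Complex.exp (α * Real.pi * Complex.I) * (((-t * r ^ α : ℝ) : ℂ) *
      Complex.exp (α * Real.pi * Complex.I)) ^ n = ((-t * r ^ α) ^ n : ℝ) *
        Complex.exp ((α * Real.pi * (n + 1) : ℝ) * Complex.I) := by
    rw [mul_pow, ← Complex.exp_nat_mul, mul_left_comm, ← Complex.exp_add]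
    push_cast; ring_nf
  have e2 : ((rexp (-r) * r ^ α : ℝ) : ℂ) * Complex.exp (α * Real.pi * Complex.I) *
     ((((-t * r ^ α : ℝ) : ℂ) * Complex.exp (α * Real.pi * Complex.I)) ^ n / (n.factorial : ℂ))
     = ((rexp (-r) * r ^ α * (-t * r ^ α) ^ n / n.factorial : ℝ) : ℂ) *
       Complex.exp ((α * Real.pi * (n + 1) : ℝ) * Complex.I) := by
    rw [mul_assoc, ← mul_div_assoc, e]
    push_cast; ring
  rw [e2, Complex.im_ofReal_mul, Complex.exp_ofReal_mul_I_im]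
  have e3 : r ^ (α * (n + 1) - 1) = r ^ α * (r ^ α) ^ n / r := by
    rw [← Real.rpow_mul_natCast hr.le, ← Real.rpow_add hr, ← Real.rpow_sub_one hr.ne']; ring_nf
  rw [e3, mul_pow]
  ring

lemma wr_integral (α t : ℝ) (h0 : 0 < α) (h1 : α < 1) (ht : 0 < t) :
    IntegrableOn (fun r : ℝ => (wrG α t (Real.log r + Real.pi * Complex.I)).im / r) (Set.Ioi 0) ∧
    Real.pi * wrightFn (-α) (1 - α) (-t) =
      ∫ r in Set.Ioi (0:ℝ), (wrG α t (Real.log r + Real.pi * Complex.I)).im / r ∧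
    Real.pi * wrightFn (-α) (1 - α) (-t) ≤
      ∫ r in Set.Ioi (0:ℝ), rexp (-r) * r ^ (α - 1) * rexp (t * r ^ α) := by
  have hb : ∀ r : ℝ, HasSum (fun n : ℕ => rexp (-r) * r ^ (α - 1) * ((t * r ^ α) ^ n / n.factorial))
      (rexp (-r) * r ^ (α - 1) * rexp (t * r ^ α)) := by
    intro r
    have := NormedSpace.expSeries_div_hasSum_exp (t * r ^ α)
    rw [← Real.exp_eq_exp_ℝ] at this
    exact this.mul_left _
  have hle : ∀ r : ℝ, 0 < r → |(wrG α t (Real.log r + Real.pi * Complex.I)).im / r| ≤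
      rexp (-r) * r ^ (α - 1) * rexp (t * r ^ α) := by
    intro r hr
    rw [wrG_ray α t r hr, abs_div, abs_of_pos hr, div_le_iff₀ hr]
    refine (Complex.abs_im_le_norm _).trans ?_
    have n1 : ‖Complex.exp (α * Real.pi * Complex.I)‖ = 1 := by
      have := Complex.norm_exp_ofReal_mul_I (α * Real.pi)
      push_cast at this; exact this
    have n2 : ‖Complex.exp (((-t * r ^ α : ℝ) : ℂ) * Complex.exp (α * Real.pi * Complex.I))‖ ≤
        rexp (t * r ^ α) := by
      rw [Complex.norm_exp]
      apply Real.exp_le_exp.2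
      refine (Complex.re_le_norm _).trans ?_
      rw [norm_mul, n1, mul_one, Complex.norm_real, Real.norm_eq_abs, neg_mul, abs_neg,
        abs_of_pos (by positivity)]
    rw [norm_mul, norm_mul, n1, one_mul, Complex.norm_real,
      Real.norm_of_nonneg (by positivity)]
    have : r ^ α = r ^ (α - 1) * r := by
      rw [Real.rpow_sub_one hr.ne']; field_simp
    calc _ ≤ rexp (-r) * r ^ α * rexp (t * r ^ α) := by gcongr
      _ = rexp (-r) * (r ^ (α - 1) * r) * rexp (t * r ^ α) := by rw [← this]
      _ = _ := by ring
  have hI := wr_integrable α h0 h1 t ht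
  have hint : IntegrableOn (fun r : ℝ => (wrG α t (Real.log r + Real.pi * Complex.I)).im / r)
      (Set.Ioi 0) := by
    refine Integrable.mono' hI ?_ ?_
    · apply Measurable.aestronglyMeasurable
      unfold wrG
      fun_prop
    · exact (ae_restrict_mem measurableSet_Ioi).mono fun r hr => hle r hr
  have hS := hasSum_integral_of_dominated_convergence (μ := volume.restrict (Set.Ioi (0:ℝ)))
    (F := fun (n : ℕ) (r : ℝ) => (-t) ^ n / n.factorial * Real.sin (α * Real.pi * (n + 1)) *
      (rexp (-r) * r ^ (α * (n + 1) - 1)))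
    (f := fun r : ℝ => (wrG α t (Real.log r + Real.pi * Complex.I)).im / r)
    (fun (n : ℕ) (r : ℝ) => rexp (-r) * r ^ (α - 1) * ((t * r ^ α) ^ n / n.factorial))
    (fun n => by apply Measurable.aestronglyMeasurable; fun_prop)
    (fun n => (ae_restrict_mem measurableSet_Ioi).mono fun r (hr : 0 < r) => by
      have e : r ^ (α * (n + 1) - 1) = r ^ (α - 1) * (r ^ α) ^ n := by
        rw [← Real.rpow_mul_natCast hr.le, ← Real.rpow_add hr]; ring_nf
      rw [Real.norm_eq_abs, abs_mul, abs_mul, abs_div, abs_pow, abs_neg, abs_of_pos ht,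
        abs_of_pos (show (0:ℝ) < n.factorial by positivity),
        abs_of_pos (show 0 < rexp (-r) * r ^ (α * (n + 1) - 1) by positivity), e, mul_pow]
      calc _ ≤ t ^ n / n.factorial * 1 * (rexp (-r) * (r ^ (α - 1) * (r ^ α) ^ n)) := by
            gcongr; exact Real.abs_sin_le_one _
        _ = _ := by ring)
    (ae_of_all _ fun r => (hb r).summable)
    (by simp_rw [fun r => (hb r).tsum_eq]; exact hI)
    ((ae_restrict_mem measurableSet_Ioi).mono fun r hr => wr_hasSum α t r hr)
  simp_rw [← wr_term α t h0] at hS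
  have heq : Real.pi * wrightFn (-α) (1 - α) (-t) =
      ∫ r in Set.Ioi (0:ℝ), (wrG α t (Real.log r + Real.pi * Complex.I)).im / r := by
    rw [wrightFn, ← tsum_mul_left]
    exact hS.tsum_eq
  refine ⟨hint, heq, ?_⟩
  rw [heq]
  exact setIntegral_mono_on hint hI measurableSet_Ioi fun r hr => (le_abs_self _).trans (hle r hr)

lemma wr_prim (α t : ℝ) : ∃ G : ℂ → ℂ, (∀ w, HasDerivAt G (wrG α t w) w) ∧
    ∀ x : ℝ, (G x).im = 0 := by
  have hd : Differentiable ℂ (wrG α t) := by unfold wrG; fun_prop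
  obtain ⟨G, hG0, hG⟩ := hd.isExactOn_univ.with_val_at 0 0
  have hG : ∀ w, HasDerivAt G (wrG α t w) w := fun w => hG w (Set.mem_univ _)
  refine ⟨G, hG, ?_⟩
  have h1 : ∀ x : ℝ, HasDerivAt (fun x : ℝ => (G x).im) 0 x := by
    intro x
    have h := ((hG x).comp_ofReal)
    have h2 := (Complex.imCLM.hasFDerivAt (x := G x)).comp_hasDerivAt x h
    have e : Complex.imCLM (wrG α t x) = 0 := by
      have : wrG α t x = ((rexp (rexp x - t * rexp (α * x) + α * x) : ℝ) : ℂ) := by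
        unfold wrG; push_cast; rfl
      rw [this, Complex.imCLM_apply, Complex.ofReal_im]
    rw [e] at h2
    exact h2
  intro x
  have := is_const_of_deriv_eq_zero (f := fun x : ℝ => (G x).im)
    (fun x => (h1 x).differentiableAt) (fun x => (h1 x).deriv) x 0
  simpa [hG0] using this

lemma wrG_norm (α t x θ : ℝ) : ‖wrG α t (x + θ * Complex.I)‖ =
    rexp (rexp x * Real.cos θ - t * (rexp (α * x) * Real.cos (α * θ)) + α * x) := by
  rw [wrG, Complex.norm_exp]
  congr 1
  have e2 : (α : ℂ) * (x + θ * Complex.I) = ((α * x : ℝ) : ℂ) + ((α * θ : ℝ) : ℂ) * Complex.I := by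
    push_cast; ring
  rw [e2]
  simp [Complex.exp_re]

lemma wrG_norm_le (α t x θ : ℝ) (ht : 0 < t) : ‖wrG α t (x + θ * Complex.I)‖ ≤
    rexp (rexp x + t * rexp (α * x) + α * x) := by
  rw [wrG_norm]
  apply Real.exp_le_exp.2
  have h1 : rexp x * Real.cos θ ≤ rexp x :=
    mul_le_of_le_one_right (Real.exp_pos _).le (Real.cos_le_one _)
  have h2 : t * (rexp (α * x) * (- Real.cos (α * θ))) ≤ t * rexp (α * x) := by
    have := Real.neg_one_le_cos (α * θ)
    gcongr
    exact mul_le_of_le_one_right (Real.exp_pos _).le (by linarith)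
  linarith

lemma wr_vert (α t x a b C : ℝ) (G : ℂ → ℂ) (hG : ∀ w, HasDerivAt G (wrG α t w) w) (hab : a ≤ b)
    (hC : ∀ θ ∈ Set.Icc a b, ‖wrG α t (x + θ * Complex.I)‖ ≤ C) :
    |(G (x + b * Complex.I)).im - (G (x + a * Complex.I)).im| ≤ C * (b - a) := by
  have hd : ∀ θ : ℝ, HasDerivAt (fun θ : ℝ => G (x + θ * Complex.I))
      (wrG α t (x + θ * Complex.I) * Complex.I) θ := by
    intro θ
    have h1 : HasDerivAt (fun θ : ℝ => (x + θ * Complex.I : ℂ)) Complex.I θ := by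
      simpa using ((Complex.ofRealCLM.hasDerivAt (x := θ)).mul_const Complex.I).const_add (x : ℂ)
    exact (hG _).comp θ h1
  have := Convex.norm_image_sub_le_of_norm_hasDerivWithin_le (s := Set.Icc a b) (C := C)
    (fun θ _ => (hd θ).hasDerivWithinAt) (fun θ hθ => by
      rw [norm_mul, Complex.norm_I, mul_one]; exact hC θ hθ) (convex_Icc a b)
      (Set.left_mem_Icc.2 hab) (Set.right_mem_Icc.2 hab)
  rw [Real.norm_of_nonneg (by linarith : 0 ≤ b - a)] at this
  refine le_trans ?_ this
  rw [← Complex.sub_im]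
  exact Complex.abs_im_le_norm _

lemma wr_limit (α t : ℝ) (h0 : 0 < α) (h1 : α < 1) (ht : 0 < t)
    (G : ℂ → ℂ) (hG : ∀ w, HasDerivAt G (wrG α t w) w) (hG0 : ∀ x : ℝ, (G x).im = 0) :
    Tendsto (fun x : ℝ => (G (x + Real.pi * Complex.I)).im) atTop
      (𝓝 (Real.pi * wrightFn (-α) (1 - α) (-t))) := by
  obtain ⟨hint, heq, -⟩ := wr_integral α t h0 h1 ht
  set K : ℝ → ℝ := fun r => if r ≤ 0 then 0 else (G (Real.log r + Real.pi * Complex.I)).im with hK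
  have hK0 : ContinuousWithinAt K (Set.Ici 0) 0 := by
    have hb : ∀ r : ℝ, 0 ≤ r → |K r| ≤ Real.pi * (rexp (r + t * r ^ α) * r ^ α) := by
      intro r hr
      rcases hr.eq_or_lt with rfl | hr
      · simp [hK]; positivity
      · have h := wr_vert α t (Real.log r) 0 Real.pi _ G hG Real.pi_pos.le
          (fun θ _ => wrG_norm_le α t (Real.log r) θ ht)
        have e : rexp (α * Real.log r) = r ^ α := by
          rw [Real.rpow_def_of_pos hr, mul_comm]
        rw [Real.exp_add, e, Real.exp_log hr] at h
        simp only [Complex.ofReal_zero, zero_mul, add_zero, hG0, sub_zero] at h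
        simp only [hK, not_le.2 hr, if_false]
        linarith
    have hc : Continuous (fun r : ℝ => Real.pi * (rexp (r + t * r ^ α) * r ^ α)) := by
      have : Continuous (fun r : ℝ => r ^ α) := Real.continuous_rpow_const h0.le
      fun_prop
    have hl := (hc.tendsto 0).mono_left (nhdsWithin_le_nhds (s := Set.Ici 0))
    simp only [Real.zero_rpow h0.ne', mul_zero] at hl
    have : K 0 = 0 := by simp [hK]
    rw [ContinuousWithinAt, this]
    exact squeeze_zero_norm' (eventually_mem_nhdsWithin.mono fun r hr => hb r hr) hl
  have hKd : ∀ r ∈ Set.Ioi (0:ℝ), HasDerivAt K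
      ((wrG α t (Real.log r + Real.pi * Complex.I)).im / r) r := by
    intro r hr
    have hr : 0 < r := hr
    have h2 : HasDerivAt (fun r : ℝ => ((Real.log r : ℝ) + Real.pi * Complex.I : ℂ))
        ((r⁻¹ : ℝ) : ℂ) r := (Real.hasDerivAt_log hr.ne').ofReal_comp.add_const _
    have h3 := (hG _).comp r h2
    have h4 := (Complex.imCLM.hasFDerivAt).comp_hasDerivAt r h3
    have e : Complex.imCLM (wrG α t (Real.log r + Real.pi * Complex.I) * ((r⁻¹ : ℝ) : ℂ)) =
      (wrG α t (Real.log r + Real.pi * Complex.I)).im / r := by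
      rw [Complex.imCLM_apply, Complex.im_mul_ofReal, div_eq_mul_inv]
    rw [e] at h4
    refine h4.congr_of_eventuallyEq ?_
    filter_upwards [lt_mem_nhds hr] with s hs
    simp [hK, not_le.2 hs]
  have hlim := tendsto_limUnder_of_hasDerivAt_of_integrableOn_Ioi hKd hint
  have := integral_Ioi_of_hasDerivAt_of_tendsto hK0 hKd hint hlim
  rw [← heq] at this
  have e0 : K 0 = 0 := by simp [hK]
  rw [e0, sub_zero] at this
  rw [← this] at hlim
  refine (hlim.comp Real.tendsto_exp_atTop).congr fun x => ?_
  simp [hK, not_le.2 (Real.exp_pos x)]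

/-- curve -/
noncomputable def wrX (α t φ : ℝ) : ℝ :=
  (1 - α)⁻¹ * (Real.log t + Real.log (Real.sin (α * φ)) - Real.log (Real.sin φ))

lemma wr_conc (β φ : ℝ) (h0 : 0 ≤ β) (h1 : β ≤ 1) (hφ : φ ∈ Set.Ioo 0 Real.pi) :
    β * Real.sin φ ≤ Real.sin (β * φ) := by
  have := strictConcaveOn_sin_Icc.concaveOn.2
    (⟨le_rfl, Real.pi_pos.le⟩ : (0:ℝ) ∈ Set.Icc 0 Real.pi) ⟨hφ.1.le, hφ.2.le⟩
    (by linarith : 0 ≤ 1 - β) h0 (by ring)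
  simpa using this

lemma wr_sinpos (β φ : ℝ) (h0 : 0 < β) (h1 : β ≤ 1) (hφ : φ ∈ Set.Ioo 0 Real.pi) :
    0 < Real.sin (β * φ) := by
  have := Real.sin_pos_of_pos_of_lt_pi hφ.1 hφ.2
  have := wr_conc β φ h0.le h1 hφ
  have : 0 < β * Real.sin φ := by positivity
  linarith

lemma wrX_eq (α t φ : ℝ) (h0 : 0 < α) (h1 : α < 1) (ht : 0 < t) (hφ : φ ∈ Set.Ioo 0 Real.pi) :
    rexp (wrX α t φ) * Real.sin φ = t * (rexp (α * wrX α t φ) * Real.sin (α * φ)) := by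
  have s1 := Real.sin_pos_of_pos_of_lt_pi hφ.1 hφ.2
  have s2 := wr_sinpos α φ h0 h1.le hφ
  have e : wrX α t φ + Real.log (Real.sin φ) =
      Real.log t + (α * wrX α t φ + Real.log (Real.sin (α * φ))) := by
    have : 1 - α ≠ 0 := by linarith
    unfold wrX; field_simp; ring
  have := congrArg rexp e
  simpa [Real.exp_add, Real.exp_log, s1, s2, ht] using this

/-- derivative of the curve -/
noncomputable def wrX' (α φ : ℝ) : ℝ :=
  (1 - α)⁻¹ * (α * Real.cos (α * φ) / Real.sin (α * φ) - Real.cos φ / Real.sin φ)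

lemma wrX_deriv (α t φ : ℝ) (h0 : 0 < α) (h1 : α < 1) (hφ : φ ∈ Set.Ioo 0 Real.pi) :
    HasDerivAt (wrX α t) (wrX' α φ) φ := by
  have s1 := Real.sin_pos_of_pos_of_lt_pi hφ.1 hφ.2
  have s2 := wr_sinpos α φ h0 h1.le hφ
  have d2 : HasDerivAt (fun φ => Real.sin (α * φ)) (Real.cos (α * φ) * (α * 1)) φ :=
    ((hasDerivAt_id φ).const_mul α).sin
  have := ((((d2.log s2.ne').const_add (Real.log t)).sub
    ((Real.hasDerivAt_sin φ).log s1.ne')).const_mul (1 - α)⁻¹)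
  refine this.congr_deriv ?_
  unfold wrX'; ring

/-- The density factor. -/
noncomputable def wrP (α t φ : ℝ) : ℝ :=
  rexp (α * wrX α t φ) * (Real.sin ((1 - α) * φ) / ((1 - α) * Real.sin φ))

lemma wr_id (α φ : ℝ) (h0 : 0 < α) (h1 : α < 1) (hφ : φ ∈ Set.Ioo 0 Real.pi) :
    wrX' α φ * Real.sin (α * φ) + Real.cos (α * φ) =
      Real.sin ((1 - α) * φ) / ((1 - α) * Real.sin φ) := by
  have s1 := Real.sin_pos_of_pos_of_lt_pi hφ.1 hφ.2
  have s2 := wr_sinpos α φ h0 h1.le hφ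
  have : 1 - α ≠ 0 := by linarith
  have e : (1 - α) * φ = φ - α * φ := by ring
  rw [e, Real.sin_sub]
  unfold wrX'
  field_simp
  ring

lemma wrY_deriv (α t φ : ℝ) (h0 : 0 < α) (h1 : α < 1) (hφ : φ ∈ Set.Ioo 0 Real.pi) :
    HasDerivAt (fun φ => rexp (α * wrX α t φ) * Real.sin (α * φ)) (α * wrP α t φ) φ := by
  have d2 : HasDerivAt (fun φ => Real.sin (α * φ)) (Real.cos (α * φ) * (α * 1)) φ :=
    ((hasDerivAt_id φ).const_mul α).sin
  have := ((wrX_deriv α t φ h0 h1 hφ).const_mul α).exp.mul d2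
  refine this.congr_deriv ?_
  rw [wrP, ← wr_id α φ h0 h1 hφ]; ring

/-- exponent on the curve -/
noncomputable def wrE (α t φ : ℝ) : ℝ :=
  -(t * rexp (α * wrX α t φ) * (Real.sin ((1 - α) * φ) / Real.sin φ))

lemma wr_re (a b : ℝ) : (Complex.exp (a + b * Complex.I)).re = rexp a * Real.cos b := by
  rw [Complex.exp_re]; simp

lemma wr_im (a b : ℝ) : (Complex.exp (a + b * Complex.I)).im = rexp a * Real.sin b := by
  rw [Complex.exp_im]; simp

lemma wrG_curve (α t φ : ℝ) (h0 : 0 < α) (h1 : α < 1) (ht : 0 < t) (hφ : φ ∈ Set.Ioo 0 Real.pi) :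
    wrG α t (wrX α t φ + φ * Complex.I) =
      ((rexp (wrE α t φ) * rexp (α * wrX α t φ) : ℝ) : ℂ) *
        Complex.exp ((α * φ : ℝ) * Complex.I) := by
  have s1 := Real.sin_pos_of_pos_of_lt_pi hφ.1 hφ.2
  have hX := wrX_eq α t φ h0 h1 ht hφ
  set X := wrX α t φ with hXd
  have e2 : (α : ℂ) * (X + φ * Complex.I) = ((α * X : ℝ) : ℂ) + ((α * φ : ℝ) : ℂ) * Complex.I := by
    push_cast; ring
  have e3 : Complex.exp (X + φ * Complex.I) - t * Complex.exp (((α * X : ℝ) : ℂ) + ((α * φ : ℝ) : ℂ) * Complex.I)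
      = ((wrE α t φ : ℝ) : ℂ) := by
    apply Complex.ext
    · have : rexp X * Real.cos φ - t * (rexp (α * X) * Real.cos (α * φ)) = wrE α t φ := by
        have e : (1 - α) * φ = φ - α * φ := by ring
        rw [wrE, e, Real.sin_sub, ← hXd]
        have : rexp X = t * (rexp (α * X) * Real.sin (α * φ)) / Real.sin φ := by
          rw [← hX]; field_simp
        rw [this]; field_simp; ring
      rw [← this, Complex.sub_re, Complex.re_ofReal_mul, wr_re, wr_re, Complex.ofReal_re]
    · rw [Complex.sub_im, Complex.im_ofReal_mul, wr_im, wr_im, Complex.ofReal_im]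
      linarith
  rw [wrG, e2, e3, ← add_assoc, Complex.exp_add, Complex.exp_add]
  push_cast; rfl

lemma wrf_deriv (α t φ : ℝ) (h0 : 0 < α) (h1 : α < 1) (ht : 0 < t) (hφ : φ ∈ Set.Ioo 0 Real.pi)
    (G : ℂ → ℂ) (hG : ∀ w, HasDerivAt G (wrG α t w) w) :
    HasDerivAt (fun φ : ℝ => (G (wrX α t φ + φ * Complex.I)).im)
      (rexp (wrE α t φ) * wrP α t φ) φ := by
  have d1 : HasDerivAt (fun φ : ℝ => ((wrX α t φ : ℝ) + φ * Complex.I : ℂ))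
      ((wrX' α φ : ℝ) + Complex.I) φ := by
    have := (Complex.ofRealCLM.hasDerivAt (x := φ)).mul_const Complex.I
    have h := (wrX_deriv α t φ h0 h1 hφ).ofReal_comp.add this
    refine h.congr_deriv ?_
    simp
  have d2 := (Complex.imCLM.hasFDerivAt).comp_hasDerivAt φ ((hG _).comp φ d1)
  refine d2.congr_deriv ?_
  rw [wrG_curve α t φ h0 h1 ht hφ, wrP, ← wr_id α φ h0 h1 hφ, Complex.imCLM_apply, mul_assoc,
    Complex.im_ofReal_mul, Complex.mul_im, Complex.exp_ofReal_mul_I_im, Complex.exp_ofReal_mul_I_re]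
  simp
  ring

lemma wrP_pos (α t φ : ℝ) (h0 : 0 < α) (h1 : α < 1) (hφ : φ ∈ Set.Ioo 0 Real.pi) :
    0 < wrP α t φ := by
  have s1 := Real.sin_pos_of_pos_of_lt_pi hφ.1 hφ.2
  have s2 := wr_sinpos (1 - α) φ (by linarith) (by linarith) hφ
  have : 0 < 1 - α := by linarith
  unfold wrP; positivity

/-- the rate -/
noncomputable def wrS (α : ℝ) : ℝ := (1 - α) / 2 * rexp (α / (1 - α) * Real.log α)

lemma wrE_le (α t φ : ℝ) (h0 : 0 < α) (h1 : α < 1) (ht : 0 < t) (hφ : φ ∈ Set.Ioo 0 Real.pi) :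
    wrE α t φ ≤ -wrS α * t ^ (1 / (1 - α)) -
      (1 - α) * t / 2 * (rexp (α * wrX α t φ) * Real.sin (α * φ)) := by
  have s1 := Real.sin_pos_of_pos_of_lt_pi hφ.1 hφ.2
  have hb : 0 < 1 - α := by linarith
  have c1 : 1 - α ≤ Real.sin ((1 - α) * φ) / Real.sin φ := by
    rw [le_div_iff₀ s1]; exact wr_conc (1 - α) φ hb.le (by linarith) hφ
  have hq : 0 < t * rexp (α * wrX α t φ) := by positivity
  have k1 : wrE α t φ ≤ -(t * rexp (α * wrX α t φ) * (1 - α)) := by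
    unfold wrE
    have := mul_le_mul_of_nonneg_left c1 hq.le
    linarith
  have k2 : t * rexp (α * wrX α t φ) * Real.sin (α * φ) ≤ t * rexp (α * wrX α t φ) :=
    mul_le_of_le_one_right hq.le (Real.sin_le_one _)
  have k3 : t ^ (1 / (1 - α)) * rexp (α / (1 - α) * Real.log α) ≤ t * rexp (α * wrX α t φ) := by
    have l1 : Real.log α + Real.log (Real.sin φ) ≤ Real.log (Real.sin (α * φ)) := by
      rw [← Real.log_mul h0.ne' s1.ne']
      exact Real.log_le_log (by positivity) (wr_conc α φ h0.le h1.le hφ)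
    have l2 : (1 - α)⁻¹ * (Real.log t + Real.log α) ≤ wrX α t φ := by
      unfold wrX
      have : 0 < (1 - α)⁻¹ := by positivity
      gcongr; linarith
    rw [Real.rpow_def_of_pos ht, ← Real.exp_add]
    nth_rewrite 2 [← Real.exp_log ht]
    rw [← Real.exp_add]
    apply Real.exp_le_exp.2
    have := mul_le_mul_of_nonneg_left l2 h0.le
    refine le_trans (le_of_eq ?_) (add_le_add_right this _)
    field_simp; ring
  have k4 := mul_le_mul_of_nonneg_left k3 hb.le
  have k5 := mul_le_mul_of_nonneg_left k2 hb.le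
  unfold wrS
  nlinarith

lemma wr_decay (α t : ℝ) (h1 : α < 1) :
    Tendsto (fun x : ℝ => rexp (-(rexp x / 2) + t * rexp (α * x) + α * x)) atTop (𝓝 0) := by
  apply Real.tendsto_exp_atBot.comp
  have a1 : Tendsto (fun x : ℝ => t * rexp (-((1 - α) * x))) atTop (𝓝 0) := by
    have : Tendsto (fun x : ℝ => (1 - α) * x) atTop atTop :=
      tendsto_id.const_mul_atTop (by linarith)
    simpa using (Real.tendsto_exp_neg_atTop_nhds_zero.comp this).const_mul t
  have a2 : Tendsto (fun x : ℝ => α * (x * rexp (-x))) atTop (𝓝 0) := by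
    have := Real.tendsto_pow_mul_exp_neg_atTop_nhds_zero 1
    simpa using this.const_mul α
  have a3 := (a1.add a2).const_add (-(1/2) : ℝ)
  have a4 := a3.neg_mul_atTop (by norm_num) Real.tendsto_exp_atTop
  refine a4.congr fun x => ?_
  have e1 : rexp (-((1 - α) * x)) * rexp x = rexp (α * x) := by
    rw [← Real.exp_add]; ring_nf
  have e2 : rexp (-x) * rexp x = 1 := by rw [← Real.exp_add]; simp
  rw [← e1]
  linear_combination (α * x) * e2

lemma wrX_top (α t : ℝ) (h0 : 0 < α) (h1 : α < 1) :
    Tendsto (wrX α t) (𝓝[<] Real.pi) atTop := by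
  unfold wrX
  have hb : 0 < 1 - α := by linarith
  apply Tendsto.const_mul_atTop (by positivity)
  simp only [sub_eq_add_neg]
  have hs : 0 < Real.sin (α * Real.pi) :=
    Real.sin_pos_of_pos_of_lt_pi (by positivity) (by nlinarith [Real.pi_pos])
  have c1 : Tendsto (fun φ => Real.log t + Real.log (Real.sin (α * φ))) (𝓝[<] Real.pi)
      (𝓝 (Real.log t + Real.log (Real.sin (α * Real.pi)))) := by
    have : ContinuousAt (fun φ => Real.log t + Real.log (Real.sin (α * φ))) Real.pi := by
      apply ContinuousAt.add continuousAt_const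
      exact ContinuousAt.log (f := fun φ => Real.sin (α * φ)) (by fun_prop) hs.ne'
    exact this.tendsto.mono_left nhdsWithin_le_nhds
  refine c1.add_atTop ?_
  apply tendsto_neg_atBot_atTop.comp
  apply Real.tendsto_log_nhdsGT_zero.comp
  apply tendsto_nhdsWithin_of_tendsto_nhds_of_eventually_within
  · have := (Real.continuous_sin.tendsto Real.pi).mono_left
      (nhdsWithin_le_nhds (s := Set.Iio Real.pi))
    simpa using this
  · filter_upwards [Ioo_mem_nhdsLT Real.pi_pos] with φ hφ
    exact Real.sin_pos_of_pos_of_lt_pi hφ.1 hφ.2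

lemma wrf_zero (α t : ℝ) (h0 : 0 < α) (h1 : α < 1) (ht : 0 < t)
    (G : ℂ → ℂ) (hG : ∀ w, HasDerivAt G (wrG α t w) w) (hG0 : ∀ x : ℝ, (G x).im = 0) :
    Tendsto (fun φ : ℝ => (G (wrX α t φ + φ * Complex.I)).im) (𝓝[>] 0) (𝓝 0) := by
  set X1 := (1 - α)⁻¹ * Real.log t
  have hl : Tendsto (fun φ : ℝ => rexp (rexp X1 + t * rexp (α * X1) + α * X1) * φ) (𝓝[>] 0) (𝓝 0) := by
    have : Continuous (fun φ : ℝ => rexp (rexp X1 + t * rexp (α * X1) + α * X1) * φ) := by fun_prop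
    simpa using (this.tendsto 0).mono_left (nhdsWithin_le_nhds (s := Set.Ioi 0))
  refine squeeze_zero_norm' ?_ hl
  filter_upwards [Ioo_mem_nhdsGT (show (0:ℝ) < Real.pi / 2 by positivity)] with φ hφ
  have hφ' : φ ∈ Set.Ioo 0 Real.pi := ⟨hφ.1, by linarith [hφ.2, Real.pi_pos]⟩
  have s2 := wr_sinpos α φ h0 h1.le hφ'
  have hX : wrX α t φ ≤ X1 := by
    have hb : 0 < (1 - α)⁻¹ := by
      have : 0 < 1 - α := by linarith
      positivity
    have hle : α * φ ≤ φ := by nlinarith [hφ.1]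
    have : Real.sin (α * φ) ≤ Real.sin φ :=
      Real.sin_le_sin_of_le_of_le_pi_div_two
        (by have := mul_pos h0 hφ.1; linarith [Real.pi_pos]) hφ.2.le hle
    have := Real.log_le_log s2 this
    unfold wrX X1
    gcongr; linarith
  have h := wr_vert α t (wrX α t φ) 0 φ _ G hG hφ.1.le
    (fun θ _ => wrG_norm_le α t (wrX α t φ) θ ht)
  simp only [Complex.ofReal_zero, zero_mul, add_zero, hG0, sub_zero] at h
  refine h.trans ?_
  have := hφ.1.le
  gcongr

lemma wrf_pi (α t : ℝ) (h0 : 0 < α) (h1 : α < 1) (ht : 0 < t)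
    (G : ℂ → ℂ) (hG : ∀ w, HasDerivAt G (wrG α t w) w) (hG0 : ∀ x : ℝ, (G x).im = 0) :
    Tendsto (fun φ : ℝ => (G (wrX α t φ + φ * Complex.I)).im) (𝓝[<] Real.pi)
      (𝓝 (Real.pi * wrightFn (-α) (1 - α) (-t))) := by
  have l1 := (wr_limit α t h0 h1 ht G hG hG0).comp (wrX_top α t h0 h1)
  have l2 := ((wr_decay α t h1).comp (wrX_top α t h0 h1)).mul_const Real.pi
  rw [zero_mul] at l2
  have l3 : Tendsto (fun φ : ℝ => (G (wrX α t φ + Real.pi * Complex.I)).im -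
      (G (wrX α t φ + φ * Complex.I)).im) (𝓝[<] Real.pi) (𝓝 0) := by
    refine squeeze_zero_norm' ?_ l2
    have : 2 * Real.pi / 3 < Real.pi := by linarith [Real.pi_pos]
    filter_upwards [Ioo_mem_nhdsLT this] with φ hφ
    have hp := Real.pi_pos
    have h := wr_vert α t (wrX α t φ) φ Real.pi
      (rexp (-(rexp (wrX α t φ) / 2) + t * rexp (α * wrX α t φ) + α * wrX α t φ)) G hG hφ.2.le ?_
    · refine h.trans ?_
      simp only [Function.comp]
      gcongr
      linarith [hφ.1]
    · intro θ hθ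
      rw [wrG_norm]
      apply Real.exp_le_exp.2
      have hc : Real.cos θ ≤ -(1/2) := by
        have := Real.cos_le_cos_of_nonneg_of_le_pi (x := 2 * Real.pi / 3) (by positivity) hθ.2
          (by linarith [hφ.1, hθ.1])
        have e : Real.cos (2 * Real.pi / 3) = -(1/2) := by
          rw [show 2 * Real.pi / 3 = Real.pi - Real.pi / 3 by ring, Real.cos_pi_sub,
            Real.cos_pi_div_three]
        linarith
      have k1 := mul_le_mul_of_nonneg_left hc (Real.exp_pos (wrX α t φ)).le
      have k2 : t * (rexp (α * wrX α t φ) * (- Real.cos (α * θ))) ≤ t * rexp (α * wrX α t φ) := by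
        have := Real.neg_one_le_cos (α * θ)
        gcongr
        exact mul_le_of_le_one_right (Real.exp_pos _).le (by linarith)
      linarith
  have := l1.sub l3
  simpa using this

lemma wr_main (α t : ℝ) (h0 : 0 < α) (h1 : α < 1) (ht : 0 < t) :
    0 < Real.pi * wrightFn (-α) (1 - α) (-t) ∧
    Real.pi * wrightFn (-α) (1 - α) (-t) ≤
      rexp (-wrS α * t ^ (1 / (1 - α))) / (α * ((1 - α) * t / 2)) := by
  obtain ⟨G, hG, hG0⟩ := wr_prim α t
  set f : ℝ → ℝ := fun φ : ℝ => (G (wrX α t φ + φ * Complex.I)).im with hf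
  set L := Real.pi * wrightFn (-α) (1 - α) (-t)
  have f0 : Tendsto f (𝓝[>] 0) (𝓝 0) := wrf_zero α t h0 h1 ht G hG hG0
  have fp : Tendsto f (𝓝[<] Real.pi) (𝓝 L) := wrf_pi α t h0 h1 ht G hG hG0
  have fd : ∀ φ ∈ Set.Ioo 0 Real.pi, HasDerivAt f (rexp (wrE α t φ) * wrP α t φ) φ :=
    fun φ hφ => wrf_deriv α t φ h0 h1 ht hφ G hG
  have hp := Real.pi_pos
  have hb : 0 < 1 - α := by linarith
  have hmono : StrictMonoOn f (Set.Ioo 0 Real.pi) := by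
    apply strictMonoOn_of_deriv_pos (convex_Ioo _ _)
    · exact fun φ hφ => (fd φ hφ).continuousAt.continuousWithinAt
    · intro φ hφ
      rw [interior_Ioo] at hφ
      rw [(fd φ hφ).deriv]
      exact mul_pos (Real.exp_pos _) (wrP_pos α t φ h0 h1 hφ)
  set k := (1 - α) * t / 2 with hk
  have hk0 : 0 < k := by positivity
  set D := rexp (-wrS α * t ^ (1 / (1 - α))) with hD
  have hD0 : 0 < D := Real.exp_pos _
  set Y : ℝ → ℝ := fun φ => rexp (α * wrX α t φ) * Real.sin (α * φ) with hY
  have hHd : ∀ φ ∈ Set.Ioo 0 Real.pi, HasDerivAt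
      (fun φ => f φ - D / (α * k) * (1 - rexp (-(k * Y φ))))
      (rexp (wrE α t φ) * wrP α t φ - D * rexp (-(k * Y φ)) * wrP α t φ) φ := by
    intro φ hφ
    have dY : HasDerivAt Y (α * wrP α t φ) φ := wrY_deriv α t φ h0 h1 hφ
    have := (fd φ hφ).sub ((((dY.const_mul k).neg.exp).const_sub 1).const_mul (D / (α * k)))
    refine this.congr_deriv ?_
    simp only [Pi.neg_apply]
    field_simp
    try ring
  have hanti : AntitoneOn (fun φ => f φ - D / (α * k) * (1 - rexp (-(k * Y φ))))
      (Set.Ioo 0 Real.pi) := by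
    apply antitoneOn_of_deriv_nonpos (convex_Ioo _ _)
    · exact fun φ hφ => (hHd φ hφ).continuousAt.continuousWithinAt
    · rw [interior_Ioo]
      exact fun φ hφ => (hHd φ hφ).differentiableAt.differentiableWithinAt
    · intro φ hφ
      rw [interior_Ioo] at hφ
      rw [(hHd φ hφ).deriv, ← sub_mul]
      apply mul_nonpos_of_nonpos_of_nonneg _ (wrP_pos α t φ h0 h1 hφ).le
      rw [hD, ← Real.exp_add]
      have := Real.exp_le_exp.2 (wrE_le α t φ h0 h1 ht hφ)
      rw [sub_eq_add_neg] at this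
      linarith
  have m1 : ∀ φ ∈ Set.Ioo 0 Real.pi, 0 ≤ f φ := by
    intro φ hφ
    refine le_of_tendsto f0 ?_
    filter_upwards [Ioo_mem_nhdsGT hφ.1] with ψ hψ
    exact (hmono ⟨hψ.1, hψ.2.trans hφ.2⟩ hφ hψ.2).le
  have m2 : ∀ φ ∈ Set.Ioo 0 Real.pi, f φ ≤ D / (α * k) := by
    intro φ hφ
    have : f φ - D / (α * k) * (1 - rexp (-(k * Y φ))) ≤ 0 := by
      refine ge_of_tendsto f0 ?_
      filter_upwards [Ioo_mem_nhdsGT hφ.1] with ψ hψ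
      have hψ' : ψ ∈ Set.Ioo 0 Real.pi := ⟨hψ.1, hψ.2.trans hφ.2⟩
      have h := hanti hψ' hφ hψ.2.le
      simp only at h
      have hY0 : 0 ≤ k * Y ψ := by
        have := wr_sinpos α ψ h0 h1.le hψ'
        positivity
      have h5 : rexp (-(k * Y ψ)) ≤ 1 := Real.exp_le_one_iff.2 (by linarith)
      have : 0 ≤ D / (α * k) * (1 - rexp (-(k * Y ψ))) :=
        mul_nonneg (by positivity) (by linarith)
      linarith
    have h6 : 0 ≤ D / (α * k) * rexp (-(k * Y φ)) := by positivity
    linarith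
  constructor
  · have q1 : Real.pi / 4 ∈ Set.Ioo 0 Real.pi := ⟨by positivity, by linarith⟩
    have q2 : Real.pi / 2 ∈ Set.Ioo 0 Real.pi := ⟨by positivity, by linarith⟩
    have a := m1 _ q1
    have b := hmono q1 q2 (by linarith)
    refine lt_of_lt_of_le (lt_of_le_of_lt a b) (ge_of_tendsto fp ?_)
    filter_upwards [Ioo_mem_nhdsLT q2.2] with ψ hψ
    exact (hmono q2 ⟨q2.1.trans hψ.1, hψ.2⟩ hψ.1).le
  · refine le_of_tendsto fp ?_
    filter_upwards [Ioo_mem_nhdsLT hp] with ψ hψ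
    exact m2 ψ hψ

theorem stmt9 (α : ℝ) (hα : α ∈ Set.Ioo (0 : ℝ) 1) :
    ∃ κ σ : ℝ, 0 < κ ∧ 0 < σ ∧ ∀ t : ℝ, 0 < t →
      0 < wrightFn (-α) (1 - α) (-t) ∧
      wrightFn (-α) (1 - α) (-t) ≤ κ * Real.exp (-σ * t ^ (1 / (1 - α))) := by
  obtain ⟨h0, h1⟩ := hα
  have hb : 0 < 1 - α := by linarith
  have hp := Real.pi_pos
  have hS : 0 < wrS α := by unfold wrS; positivity
  set B := ∫ r in Set.Ioi (0:ℝ), rexp (-r) * r ^ (α - 1) * rexp (1 * r ^ α) with hB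
  have hB0 : 0 ≤ B := setIntegral_nonneg measurableSet_Ioi fun r hr => by
    have : 0 < r := hr
    positivity
  set c := 1 / (α * ((1 - α) / 2)) with hc
  have hc0 : 0 < c := by positivity
  refine ⟨(c + B * rexp (wrS α)) / Real.pi, wrS α, by positivity, hS, fun t ht => ?_⟩
  obtain ⟨m1, m2⟩ := wr_main α t h0 h1 ht
  refine ⟨pos_of_mul_pos_right m1 hp.le, ?_⟩
  rw [div_mul_eq_mul_div, le_div_iff₀ hp, mul_comm]
  set D := rexp (-wrS α * t ^ (1 / (1 - α))) with hD
  have hD0 : 0 < D := Real.exp_pos _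
  rcases le_total 1 t with h | h
  · have : D / (α * ((1 - α) * t / 2)) ≤ c * D := by
      rw [hc, div_mul_eq_mul_div, one_mul]
      gcongr
      nlinarith
    have h7 : 0 ≤ B * rexp (wrS α) * D := by positivity
    nlinarith
  · have hle : Real.pi * wrightFn (-α) (1 - α) (-t) ≤ B := by
      refine (wr_integral α t h0 h1 ht).2.2.trans ?_
      refine setIntegral_mono_on (wr_integrable α h0 h1 t ht) (wr_integrable α h0 h1 1 one_pos)
        measurableSet_Ioi fun r hr => ?_
      have : 0 < r := hr
      gcongr
    have hT : t ^ (1 / (1 - α)) ≤ 1 := Real.rpow_le_one ht.le h (by positivity)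
    have h8 : 1 ≤ rexp (wrS α) * D := by
      rw [hD, ← Real.exp_add]
      apply Real.one_le_exp
      nlinarith
    have h9 := mul_le_mul_of_nonneg_left h8 hB0
    have : 0 ≤ c * D := by positivity
    nlinarith
end

section
/- Let α ∈ (0,1). There exist C_α > 0 and t* > 0 such that W_{-α,1}(-t^{1-α}) ≥ C_α t^{-1/2} e^{-γ_α t} for all t > t*; moreover, there exist C'_α > 0 and t** > 0 such that W_{-α,1}(-2 t^{1-α}) ≥ C'_α t^{-1/2} e^{-γ_α 2^{1/(1-α)} t} for all t > t**. -/
open Real Filter Topology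

/-- `γ_α = (1-α) α^{α/(1-α)}`. -/
noncomputable def gammaAlpha (α : ℝ) : ℝ := (1 - α) * α ^ (α / (1 - α))

open MeasureTheory Set in
theorem w_young (α x c : ℝ) (h0 : 0 < α) (h1 : α < 1) (hx : 0 < x) (hc : 0 < c) :
    ∃ C : ℝ, ∀ r : ℝ, 0 < r → x * r ^ α ≤ c * r + C := by
  set r0 := (x / c) ^ (1 / (1 - α)) with hr0
  have hr0p : 0 < r0 := rpow_pos_of_pos (div_pos hx hc) _
  have e0 : r0 ^ (1 - α) = x / c := by
    rw [hr0, ← rpow_mul (div_pos hx hc).le, one_div_mul_cancel (by linarith), rpow_one]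
  refine ⟨x * r0 ^ α, fun r hr => ?_⟩
  have p0 : 0 < r0 ^ α := rpow_pos_of_pos hr0p _
  rcases le_total r r0 with h | h
  · have : r ^ α ≤ r0 ^ α := rpow_le_rpow hr.le h h0.le
    have := mul_le_mul_of_nonneg_left this hx.le
    have := mul_pos hc hr
    linarith
  · have e1 : r0 ^ (1 - α) ≤ r ^ (1 - α) := rpow_le_rpow hr0p.le h (by linarith)
    rw [e0, div_le_iff₀ hc] at e1
    have e2 : r ^ (1 - α) * r ^ α = r := by
      rw [← rpow_add hr]; simp
    have := mul_le_mul_of_nonneg_right e1 (rpow_pos_of_pos hr α).le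
    have := mul_pos hx p0
    nlinarith

/-- argument of the exponential on the negative axis -/
noncomputable def wz (α x r : ℝ) : ℂ := ((-(x * r ^ α) : ℝ) : ℂ) * Complex.exp ((α * π : ℝ) * Complex.I)

theorem wz_norm (α x r : ℝ) (hx : 0 < x) (hr : 0 < r) : ‖wz α x r‖ = x * r ^ α := by
  rw [wz, norm_mul, Complex.norm_exp_ofReal_mul_I, mul_one, Complex.norm_real, norm_neg,
    Real.norm_of_nonneg]
  positivity

theorem wz_pow_im (α x r : ℝ) (hr : 0 < r) (n : ℕ) :
    ((wz α x r) ^ n).im = (-x) ^ n * r ^ (α * n) * Real.sin (π * (α * n)) := by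
  have e : (wz α x r) ^ n = (((-x) ^ n * r ^ (α * n) : ℝ) : ℂ) *
      Complex.exp ((π * (α * n) : ℝ) * Complex.I) := by
    rw [wz, mul_pow, ← Complex.exp_nat_mul, ← Complex.ofReal_pow, neg_mul_eq_neg_mul, mul_pow,
      ← rpow_mul_natCast hr.le]
    congr 2
    push_cast
    ring
  rw [e, Complex.im_ofReal_mul, Complex.exp_ofReal_mul_I_im]

noncomputable def wI (α x r : ℝ) : ℝ := Real.exp (-r) / r * (Complex.exp (wz α x r)).im

noncomputable def wB (α x r : ℝ) : ℝ := Real.exp (-r) / r * (Real.exp (x * r ^ α) - 1)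

open MeasureTheory Set in
theorem wB_integrable (α x : ℝ) (h0 : 0 < α) (h1 : α < 1) (hx : 0 < x) :
    IntegrableOn (wB α x) (Ioi 0) := by
  obtain ⟨C, hC⟩ := w_young α x (1/2) h0 h1 hx (by norm_num)
  have hi := (integrableOn_rpow_mul_exp_neg_mul_rpow (s := α - 1) (p := 1) (b := 1/2)
    (by linarith) one_pos (by norm_num)).const_mul (x * Real.exp C)
  refine Integrable.mono' hi ?_ ?_
  · apply Measurable.aestronglyMeasurable
    unfold wB
    fun_prop
  · refine (ae_restrict_iff' measurableSet_Ioi).mpr (ae_of_all _ fun r (hr : 0 < r) => ?_)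
    have hu : 0 ≤ x * r ^ α := by positivity
    have k1 : Real.exp (x * r ^ α) - 1 ≤ x * r ^ α * Real.exp (x * r ^ α) := by
      have := Real.add_one_le_exp (-(x * r ^ α))
      have h2 : Real.exp (-(x * r ^ α)) * Real.exp (x * r ^ α) = 1 := by
        rw [← Real.exp_add]; simp
      nlinarith [Real.exp_pos (x * r ^ α)]
    have k0 : 0 ≤ Real.exp (x * r ^ α) - 1 := by
      have := Real.add_one_le_exp (x * r ^ α); linarith
    have k2 : Real.exp (x * r ^ α) ≤ Real.exp (1/2 * r + C) := Real.exp_le_exp.mpr (hC r hr)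
    rw [wB, Real.norm_of_nonneg (by positivity)]
    calc Real.exp (-r) / r * (Real.exp (x * r ^ α) - 1)
        ≤ Real.exp (-r) / r * (x * r ^ α * Real.exp (1/2 * r + C)) := by
          apply mul_le_mul_of_nonneg_left _ (by positivity)
          exact k1.trans (mul_le_mul_of_nonneg_left k2 hu)
      _ = _ := by
          rw [rpow_sub_one hr.ne', rpow_one, Real.exp_add]
          have : Real.exp (-(1/2) * r) = Real.exp (-r) * Real.exp (1/2 * r) := by
            rw [← Real.exp_add]; congr 1; ring
          rw [this]
          field_simp

theorem w_rgamma (s : ℝ) (hs : 0 < s) :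
    1 / Real.Gamma (1 - s) = Real.Gamma s * Real.sin (π * s) / π := by
  have h := Real.Gamma_mul_Gamma_one_sub s
  have hg := (Real.Gamma_pos_of_pos hs).ne'
  by_cases hsin : Real.sin (π * s) = 0
  · rw [hsin, div_zero] at h
    rcases mul_eq_zero.mp h with h | h
    · exact absurd h hg
    · rw [h, hsin]; simp
  · have h2 : Real.Gamma (1 - s) = π / Real.sin (π * s) / Real.Gamma s := by
      rw [eq_div_iff hg, mul_comm]; exact h
    have := Real.pi_ne_zero
    rw [h2]; field_simp

open MeasureTheory Set in
theorem w_integral (α x : ℝ) (h0 : 0 < α) (h1 : α < 1) (hx : 0 < x) :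
    IntegrableOn (wI α x) (Ioi 0) ∧
    wrightFn (-α) 1 (-x) = 1 + (1 / π) * ∫ r in Ioi 0, wI α x r := by
  have hmeas : Measurable (wI α x) := by
    unfold wI wz
    fun_prop
  have hexpc : ∀ z : ℂ, HasSum (fun n : ℕ => z ^ (n + 1) / ((n + 1).factorial : ℂ)) (Complex.exp z - 1) := by
    intro z
    have := NormedSpace.expSeries_div_hasSum_exp (𝔸 := ℂ) z
    rw [← Complex.exp_eq_exp_ℂ] at this
    simpa using (hasSum_nat_add_iff' 1).mpr this
  have hexpr : ∀ z : ℝ, HasSum (fun n : ℕ => z ^ (n + 1) / ((n + 1).factorial : ℝ)) (Real.exp z - 1) := by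
    intro z
    have := NormedSpace.expSeries_div_hasSum_exp (𝔸 := ℝ) z
    rw [← Real.exp_eq_exp_ℝ] at this
    simpa using (hasSum_nat_add_iff' 1).mpr this
  have hB := wB_integrable α x h0 h1 hx
  have hbs : ∀ r : ℝ, HasSum (fun n : ℕ => Real.exp (-r) / r *
      ((x * r ^ α) ^ (n + 1) / ((n + 1).factorial : ℝ))) (wB α x r) := by
    intro r
    exact (hexpr _).mul_left _
  have hFs : ∀ r : ℝ, HasSum (fun n : ℕ => Real.exp (-r) / r *
      ((wz α x r) ^ (n + 1) / ((n + 1).factorial : ℂ)).im) (wI α x r) := by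
    intro r
    have := (Complex.hasSum_im (hexpc (wz α x r))).mul_left (Real.exp (-r) / r)
    simpa [wI] using this
  have hbd : ∀ n : ℕ, ∀ r : ℝ, 0 < r → ‖Real.exp (-r) / r *
      ((wz α x r) ^ (n + 1) / ((n + 1).factorial : ℂ)).im‖ ≤ Real.exp (-r) / r *
      ((x * r ^ α) ^ (n + 1) / ((n + 1).factorial : ℝ)) := by
    intro n r hr
    rw [norm_mul, Real.norm_of_nonneg (by positivity : 0 ≤ Real.exp (-r) / r)]
    apply mul_le_mul_of_nonneg_left _ (by positivity)
    refine (Complex.abs_im_le_norm _).trans ?_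
    rw [norm_div, norm_pow, wz_norm α x r hx hr, Complex.norm_natCast]
  have hI : IntegrableOn (wI α x) (Ioi 0) := by
    refine Integrable.mono' hB hmeas.aestronglyMeasurable ?_
    refine (ae_restrict_iff' measurableSet_Ioi).mpr (ae_of_all _ fun r (hr : 0 < r) => ?_)
    have := tsum_of_norm_bounded (hbs r) (fun n => hbd n r hr)
    rwa [(hFs r).tsum_eq] at this
  refine ⟨hI, ?_⟩
  have key := hasSum_integral_of_dominated_convergence (μ := volume.restrict (Ioi (0:ℝ)))
    (F := fun (n : ℕ) (r : ℝ) => Real.exp (-r) / r *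
      ((wz α x r) ^ (n + 1) / ((n + 1).factorial : ℂ)).im) (f := wI α x)
    (fun (n : ℕ) (r : ℝ) => Real.exp (-r) / r *
      ((x * r ^ α) ^ (n + 1) / ((n + 1).factorial : ℝ)))
    (fun n => by
      apply Measurable.aestronglyMeasurable
      unfold wz
      fun_prop)
    (fun n => (ae_restrict_iff' measurableSet_Ioi).mpr (ae_of_all _ fun r (hr : 0 < r) => hbd n r hr))
    (ae_of_all _ fun r => (hbs r).summable)
    (by
      have : (fun r => ∑' n : ℕ, Real.exp (-r) / r *
        ((x * r ^ α) ^ (n + 1) / ((n + 1).factorial : ℝ))) = wB α x := by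
        funext r; exact (hbs r).tsum_eq
      rw [this]; exact hB)
    (ae_of_all _ hFs)
  have hterm : ∀ n : ℕ, (1 / π) * ∫ r in Ioi (0:ℝ), Real.exp (-r) / r *
      ((wz α x r) ^ (n + 1) / ((n + 1).factorial : ℂ)).im =
      (-x) ^ (n + 1) / ((n + 1).factorial * Real.Gamma (-α * (n + 1 : ℕ) + 1)) := by
    intro n
    have hs : 0 < α * (n + 1 : ℕ) := by positivity
    have e1 : ∫ r in Ioi (0:ℝ), Real.exp (-r) / r *
      ((wz α x r) ^ (n + 1) / ((n + 1).factorial : ℂ)).im =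
      ∫ r in Ioi (0:ℝ), ((-x) ^ (n + 1) / (n + 1).factorial * Real.sin (π * (α * (n + 1 : ℕ)))) *
        (Real.exp (-r) * r ^ (α * (n + 1 : ℕ) - 1)) := by
      refine setIntegral_congr_fun measurableSet_Ioi fun r (hr : 0 < r) => ?_
      rw [Complex.div_natCast_im, wz_pow_im α x r hr, rpow_sub_one hr.ne']
      field_simp
    rw [e1, integral_const_mul, ← Real.Gamma_eq_integral hs]
    have := w_rgamma _ hs
    rw [show -α * ((n + 1 : ℕ) : ℝ) + 1 = 1 - α * (n + 1 : ℕ) by ring, div_mul_eq_div_div,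
      div_eq_mul_one_div _ (Real.Gamma _), this]
    ring
  have k2 := key.mul_left (1 / π)
  simp only [hterm] at k2
  have k3 := (hasSum_nat_add_iff (f := fun n : ℕ => (-x) ^ n / ((n.factorial : ℝ) * Real.Gamma (-α * n + 1))) 1).mp k2
  rw [wrightFn, k3.tsum_eq]
  simp
  ring
noncomputable def wG (α x : ℝ) (w : ℂ) : ℂ :=
  Complex.exp (Complex.exp w - x * Complex.exp (α * w))

theorem wG_expo (α x : ℝ) (a b : ℝ) :
    Complex.exp ((a : ℂ) + b * Complex.I) - x * Complex.exp (α * ((a : ℂ) + b * Complex.I)) =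
    ((Real.exp a * Real.cos b - x * (Real.exp (α * a) * Real.cos (α * b)) : ℝ) : ℂ) +
    ((Real.exp a * Real.sin b - x * (Real.exp (α * a) * Real.sin (α * b)) : ℝ) : ℂ) * Complex.I := by
  have e1 : (α : ℂ) * ((a : ℂ) + b * Complex.I) = (α * a : ℂ) + (α * b : ℂ) * Complex.I := by ring
  rw [e1, Complex.exp_add_mul_I, Complex.exp_add_mul_I]
  push_cast
  ring

theorem w_exists_H (α x : ℝ) : ∃ H : ℂ → ℂ, (∀ w, HasDerivAt H (wG α x w) w) ∧ (H 0).im = 0 := by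
  have hd : Differentiable ℂ (wG α x) := by
    unfold wG
    fun_prop
  obtain ⟨H, hH⟩ := hd.isExactOn_univ
  refine ⟨fun w => H w - H 0, fun w => (hH w (Set.mem_univ w)).sub_const _, by simp⟩

theorem w_H_real (α x : ℝ) (H : ℂ → ℂ) (hH : ∀ w, HasDerivAt H (wG α x w) w) (h0 : (H 0).im = 0)
    (a : ℝ) : (H a).im = 0 := by
  have hd : ∀ a : ℝ, HasDerivAt (fun a : ℝ => (H a).im) 0 a := by
    intro a
    have h1 : HasDerivAt (fun a : ℝ => H a) (wG α x a) a := (hH a).comp_ofReal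
    have h2 : HasDerivAt (fun a : ℝ => (H a).im) (wG α x a).im a :=
      (Complex.imCLM.hasFDerivAt.comp_hasDerivAt a h1)
    have h3 : (wG α x a).im = 0 := by
      have : wG α x a = ((Real.exp (Real.exp a - x * Real.exp (α * a)) : ℝ) : ℂ) := by
        simp [wG]
      rw [this, Complex.ofReal_im]
    rwa [h3] at h2
  have := is_const_of_deriv_eq_zero (fun a => (hd a).differentiableAt) (fun a => (hd a).deriv) a 0
  simpa [h0] using this

theorem w_H_bot (α x : ℝ) (hα : 0 < α) (hx : 0 < x) (H : ℂ → ℂ) (hH : ∀ w, HasDerivAt H (wG α x w) w)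
    (h0 : (H 0).im = 0) :
    Tendsto (fun a : ℝ => (H (a + π * Complex.I)).im) atBot (𝓝 π) := by
  have hlim : Tendsto (fun a : ℝ => Real.exp a + x * Real.exp (α * a)) atBot (𝓝 0) := by
    have h1 := Real.tendsto_exp_atBot
    have h2 : Tendsto (fun a : ℝ => Real.exp (α * a)) atBot (𝓝 0) :=
      h1.comp (tendsto_id.const_mul_atBot hα)
    simpa using h1.add (h2.const_mul x)
  have hev : ∀ᶠ a : ℝ in atBot, Real.exp a + x * Real.exp (α * a) ≤ 1 :=
    hlim.eventually (eventually_le_nhds one_pos)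
  have hmain : ∀ᶠ a : ℝ in atBot, ‖(H (a + π * Complex.I)).im - π‖ ≤
      2 * (Real.exp a + x * Real.exp (α * a)) * π := by
    filter_upwards [hev] with a ha
    set s : Set ℂ := {w | w.re ≤ a}
    have hs : Convex ℝ s := convex_halfSpace_re_le a
    have key := hs.norm_image_sub_le_of_norm_hasDerivWithin_le (f := fun w => H w - w)
      (f' := fun w => wG α x w - 1) (C := 2 * (Real.exp a + x * Real.exp (α * a)))
      (x := (a : ℂ)) (y := a + π * Complex.I)
      (fun w _ => ((hH w).sub (hasDerivAt_id w)).hasDerivWithinAt)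
      (fun w hw => by
        have hw : w.re ≤ a := hw
        have hb : ‖Complex.exp w - x * Complex.exp (α * w)‖ ≤ Real.exp a + x * Real.exp (α * a) := by
          refine (norm_sub_le _ _).trans ?_
          rw [norm_mul, Complex.norm_exp, Complex.norm_exp, Complex.norm_real,
            Real.norm_of_nonneg hx.le, Complex.re_ofReal_mul]
          gcongr
        exact (Complex.norm_exp_sub_one_le (hb.trans ha)).trans (by linarith))
      (by simp [s]) (by simp [s])
    have e1 : ‖((a : ℂ) + π * Complex.I) - a‖ = π := by
      simp [abs_of_pos Real.pi_pos]
    rw [e1] at key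
    refine le_trans ?_ key
    refine le_trans (le_of_eq ?_) (Complex.abs_im_le_norm _)
    have := w_H_real α x H hH h0 a
    simp [this]
  rw [tendsto_iff_norm_sub_tendsto_zero]
  refine squeeze_zero' (Eventually.of_forall fun _ => norm_nonneg _) hmain ?_
  simpa using (hlim.const_mul 2).mul_const π

open MeasureTheory Set in
theorem w_H_top (α x : ℝ) (hα : 0 < α) (h1 : α < 1) (hx : 0 < x) (H : ℂ → ℂ)
    (hH : ∀ w, HasDerivAt H (wG α x w) w) (h0 : (H 0).im = 0) :
    Tendsto (fun a : ℝ => (H (a + π * Complex.I)).im) atTop (𝓝 (π * wrightFn (-α) 1 (-x))) := by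
  obtain ⟨hI, hW⟩ := w_integral α x hα h1 hx
  set K : ℝ → ℝ := fun r => (H (Real.log r + π * Complex.I)).im with hK
  have hKd : ∀ r ∈ Ioi (0:ℝ), HasDerivAt K (wI α x r) r := by
    intro r hr
    have hr : 0 < r := hr
    have a1 : HasDerivAt (fun r : ℝ => ((Real.log r : ℝ) : ℂ) + π * Complex.I) ((r⁻¹ : ℝ) : ℂ) r :=
      ((Real.hasDerivAt_log hr.ne').ofReal_comp).add_const _
    have a2 := (hH (Real.log r + π * Complex.I)).comp r a1
    have a3 : HasDerivAt K (wG α x (Real.log r + π * Complex.I) * ((r⁻¹ : ℝ) : ℂ)).im r :=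
      (Complex.imCLM.hasFDerivAt.comp_hasDerivAt r a2)
    convert a3 using 1
    have e1 : Complex.exp (Real.log r + π * Complex.I) = ((-r : ℝ) : ℂ) := by
      rw [Complex.exp_add, Complex.exp_pi_mul_I, ← Complex.ofReal_exp, Real.exp_log hr]; simp
    have e2 : - (x * Complex.exp (α * (Real.log r + π * Complex.I))) = wz α x r := by
      rw [wz, mul_add, Complex.exp_add, rpow_def_of_pos hr]
      push_cast
      rw [mul_comm (α : ℂ) (Real.log r : ℂ)]
      ring_nf
    rw [wG, sub_eq_add_neg, e1, e2, Complex.exp_add, ← Complex.ofReal_exp, mul_comm,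
      Complex.im_ofReal_mul, Complex.im_ofReal_mul, wI]
    ring
  have hK0 : Tendsto K (𝓝[>] 0) (𝓝 π) :=
    (w_H_bot α x hα hx H hH h0).comp Real.tendsto_log_nhdsGT_zero
  have hKt := tendsto_limUnder_of_hasDerivAt_of_integrableOn_Ioi hKd hI
  set m := limUnder atTop K
  have hint : ∫ r in Ioi 0, wI α x r = m - π := by
    let f := Function.update K 0 π
    have hderiv : ∀ r ∈ Ioi (0:ℝ), HasDerivAt f (wI α x r) r := by
      intro r hr
      have hr' : (0:ℝ) < r := hr
      apply (hKd r hr).congr_of_eventuallyEq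
      filter_upwards [eventually_ne_nhds hr'.ne'] with y hy
      exact Function.update_of_ne hy π K
    have htendsto : Tendsto f atTop (𝓝 m) := by
      apply hKt.congr'
      filter_upwards [eventually_ne_atTop (0:ℝ)] with r hr
      exact (Function.update_of_ne hr π K).symm
    rw [← Ici_sdiff_left] at hK0
    simpa [f] using integral_Ioi_of_hasDerivAt_of_tendsto
      (continuousWithinAt_update_same.mpr hK0) hderiv hI htendsto
  have hm : m = π * wrightFn (-α) 1 (-x) := by
    have := Real.pi_ne_zero
    rw [hW, hint]; field_simp; ring
  rw [← hm]
  have := hKt.comp Real.tendsto_exp_atTop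
  refine this.congr fun a => ?_
  simp [hK]

/-- log-radius along the steepest descent curve -/
noncomputable def wl (α x θ : ℝ) : ℝ :=
  (Real.log x + Real.log (Real.sin (α * θ)) - Real.log (Real.sin θ)) / (1 - α)

noncomputable def wg (α x θ : ℝ) : ℝ :=
  Real.exp (-(Real.exp (wl α x θ) * Real.sin ((1 - α) * θ) / Real.sin (α * θ)))

theorem wG_curve (α x θ : ℝ) (hα : 0 < α) (h1 : α < 1) (hx : 0 < x) (hθ0 : 0 < θ) (hθ : θ < π) :
    wG α x (wl α x θ + θ * Complex.I) = (wg α x θ : ℂ) := by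
  have s1 : 0 < Real.sin θ := Real.sin_pos_of_pos_of_lt_pi hθ0 hθ
  have s2 : 0 < Real.sin (α * θ) := Real.sin_pos_of_pos_of_lt_pi (by positivity) (by nlinarith)
  set l := wl α x θ with hl
  have e1 : Real.exp l * Real.sin θ = x * (Real.exp (α * l) * Real.sin (α * θ)) := by
    have : l = α * l + (Real.log x + Real.log (Real.sin (α * θ)) - Real.log (Real.sin θ)) := by
      have : (1 - α) * l = (Real.log x + Real.log (Real.sin (α * θ)) - Real.log (Real.sin θ)) := by
        rw [hl, wl, mul_div_cancel₀ _ (by linarith)]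
      linarith
    conv_lhs => rw [this]
    rw [Real.exp_add, Real.exp_sub, Real.exp_add, Real.exp_log hx, Real.exp_log s1, Real.exp_log s2]
    field_simp
  rw [wG, wG_expo, e1, sub_self, Complex.ofReal_zero, zero_mul, add_zero, ← Complex.ofReal_exp, wg]
  congr 2
  have e2 : Real.sin ((1 - α) * θ) = Real.sin θ * Real.cos (α * θ) - Real.cos θ * Real.sin (α * θ) := by
    rw [sub_mul, one_mul, Real.sin_sub]
  rw [e2, ← hl]
  field_simp
  linear_combination (Real.cos (α * θ)) * e1

theorem w_phi_deriv (α x θ : ℝ) (hα : 0 < α) (h1 : α < 1) (hx : 0 < x) (hθ0 : 0 < θ) (hθ : θ < π)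
    (H : ℂ → ℂ) (hH : ∀ w, HasDerivAt H (wG α x w) w) :
    HasDerivAt (fun θ : ℝ => (H (wl α x θ + θ * Complex.I)).im) (wg α x θ) θ := by
  have s1 : 0 < Real.sin θ := Real.sin_pos_of_pos_of_lt_pi hθ0 hθ
  have s2 : 0 < Real.sin (α * θ) := Real.sin_pos_of_pos_of_lt_pi (by positivity) (by nlinarith)
  have hd : DifferentiableAt ℝ (wl α x) θ := by
    unfold wl
    have := s1.ne'
    have := s2.ne'
    fun_prop (disch := assumption)
  have a1 : HasDerivAt (fun θ : ℝ => ((wl α x θ : ℝ) : ℂ) + θ * Complex.I)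
      (((deriv (wl α x) θ : ℝ) : ℂ) + 1 * Complex.I) θ :=
    (hd.hasDerivAt.ofReal_comp).add ((hasDerivAt_id θ).ofReal_comp.mul_const _)
  have a2 := (hH (wl α x θ + θ * Complex.I)).comp θ a1
  have a3 : HasDerivAt (fun θ : ℝ => (H (wl α x θ + θ * Complex.I)).im)
    (wG α x (wl α x θ + θ * Complex.I) * (((deriv (wl α x) θ : ℝ) : ℂ) + 1 * Complex.I)).im θ :=
      (Complex.imCLM.hasFDerivAt.comp_hasDerivAt θ a2)
  convert a3 using 1
  rw [wG_curve α x θ hα h1 hx hθ0 hθ, Complex.im_ofReal_mul]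
  simp

theorem w_phi_zero (α x : ℝ) (hα : 0 < α) (h1 : α < 1) (hx : 0 < x)
    (H : ℂ → ℂ) (hH : ∀ w, HasDerivAt H (wG α x w) w) (h0 : (H 0).im = 0) :
    Tendsto (fun θ : ℝ => (H (wl α x θ + θ * Complex.I)).im) (𝓝[>] 0) (𝓝 0) := by
  have hc : Continuous H := continuous_iff_continuousAt.mpr fun w => (hH w).continuousAt
  have hsl : ∀ c : ℝ, Tendsto (fun θ : ℝ => Real.sin (c * θ) / θ) (𝓝[>] 0) (𝓝 c) := by
    intro c
    have : HasDerivAt (fun θ : ℝ => Real.sin (c * θ)) c 0 := by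
      have := ((hasDerivAt_id (0:ℝ)).const_mul c).sin
      simpa using this
    have := this.tendsto_slope_zero_right
    simpa [div_eq_inv_mul] using this
  have hll : Tendsto (wl α x) (𝓝[>] 0) (𝓝 ((Real.log x + (Real.log α - Real.log 1)) / (1 - α))) := by
    have t1 := (hsl α).log hα.ne'
    have t2 := (hsl 1).log one_ne_zero
    have t3 := ((t1.sub t2).const_add (Real.log x)).div_const (1 - α)
    refine t3.congr' ?_
    have hev : ∀ᶠ θ : ℝ in 𝓝[>] 0, θ < π :=
      eventually_nhdsWithin_of_eventually_nhds (eventually_lt_nhds Real.pi_pos)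
    filter_upwards [self_mem_nhdsWithin, hev] with θ hθ0 hθ
    have hθ0 : 0 < θ := hθ0
    have s1 : 0 < Real.sin θ := Real.sin_pos_of_pos_of_lt_pi hθ0 hθ
    have s2 : 0 < Real.sin (α * θ) := Real.sin_pos_of_pos_of_lt_pi (by positivity) (by nlinarith)
    rw [wl, one_mul, Real.log_div s2.ne' hθ0.ne', Real.log_div s1.ne' hθ0.ne']
    congr 1; ring
  set l0 := (Real.log x + (Real.log α - Real.log 1)) / (1 - α)
  have t0 : Tendsto (fun θ : ℝ => θ) (𝓝[>] 0) (𝓝 0) := tendsto_id.mono_left nhdsWithin_le_nhds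
  have t4 : Tendsto (fun θ : ℝ => ((wl α x θ : ℝ) : ℂ) + θ * Complex.I) (𝓝[>] 0)
      (𝓝 ((l0 : ℂ) + ((0:ℝ) : ℂ) * Complex.I)) :=
    ((Complex.continuous_ofReal.tendsto l0).comp hll).add
      (((Complex.continuous_ofReal.tendsto 0).comp t0).mul_const _)
  have t5 := ((Complex.continuous_im.comp hc).tendsto _).comp t4
  have : (H ((l0 : ℂ) + ((0:ℝ) : ℂ) * Complex.I)).im = 0 := by
    have := w_H_real α x H hH h0 l0
    simpa using this
  simp only [Function.comp_def] at t5
  rwa [this] at t5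

theorem w_phi_pi (α x : ℝ) (hα : 0 < α) (h1 : α < 1) (hx : 0 < x)
    (H : ℂ → ℂ) (hH : ∀ w, HasDerivAt H (wG α x w) w) (h0 : (H 0).im = 0) :
    Tendsto (fun θ : ℝ => (H (wl α x θ + θ * Complex.I)).im) (𝓝[<] π)
      (𝓝 (π * wrightFn (-α) 1 (-x))) := by
  have hl : Tendsto (wl α x) (𝓝[<] π) atTop := by
    have t1 : Tendsto (fun θ => Real.log (Real.sin (α * θ))) (𝓝[<] π) (𝓝 (Real.log (Real.sin (α * π)))) := by
      have s2 : 0 < Real.sin (α * π) :=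
        Real.sin_pos_of_pos_of_lt_pi (by positivity) (by nlinarith [Real.pi_pos])
      have : ContinuousAt (fun θ => Real.log (Real.sin (α * θ))) π := by
        refine ContinuousAt.log (f := fun θ => Real.sin (α * θ)) ?_ s2.ne'
        fun_prop
      exact this.tendsto.mono_left nhdsWithin_le_nhds
    have t2 : Tendsto (fun θ => Real.log (Real.sin θ)) (𝓝[<] π) atBot := by
      refine Real.tendsto_log_nhdsGT_zero.comp ?_
      refine tendsto_nhdsWithin_iff.mpr ⟨?_, ?_⟩
      · have := (Real.continuous_sin.tendsto π).mono_left (nhdsWithin_le_nhds (s := Set.Iio π))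
        rwa [Real.sin_pi] at this
      · have hev : ∀ᶠ θ : ℝ in 𝓝[<] π, 0 < θ :=
          eventually_nhdsWithin_of_eventually_nhds (eventually_gt_nhds Real.pi_pos)
        filter_upwards [self_mem_nhdsWithin, hev] with θ hθ hθ0
        exact Real.sin_pos_of_pos_of_lt_pi hθ0 hθ
    have t3 := (t1.const_add (Real.log x)).add_atTop (tendsto_neg_atBot_atTop.comp t2)
    exact (t3.atTop_div_const (by linarith : 0 < 1 - α)).congr fun θ => by
      simp [wl, sub_eq_add_neg]
  obtain ⟨C, hC⟩ := w_young α x (1/4) hα h1 hx (by norm_num)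
  have hT := (w_H_top α x hα h1 hx H hH h0).comp hl
  have hev : ∀ᶠ θ : ℝ in 𝓝[<] π, 2 * π / 3 < θ :=
    eventually_nhdsWithin_of_eventually_nhds (eventually_gt_nhds (by linarith [Real.pi_pos]))
  have hbound : ∀ᶠ θ : ℝ in 𝓝[<] π, ‖(H (wl α x θ + θ * Complex.I)).im -
      (H (wl α x θ + π * Complex.I)).im‖ ≤ Real.exp (-(1/4) * Real.exp (wl α x θ) + C) * π := by
    filter_upwards [self_mem_nhdsWithin, hev] with θ hθ hθ2
    have hθ : θ < π := hθ
    set a := wl α x θ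
    have hp := Real.pi_pos
    have hs : Convex ℝ (Set.Icc (2 * π / 3) π) := convex_Icc _ _
    have key := hs.norm_image_sub_le_of_norm_hasDerivWithin_le
      (f := fun b : ℝ => H (a + b * Complex.I))
      (f' := fun b : ℝ => wG α x (a + b * Complex.I) * Complex.I)
      (C := Real.exp (-(1/4) * Real.exp a + C)) (x := π) (y := θ)
      (fun b _ => by
        have a1 : HasDerivAt (fun b : ℝ => (a : ℂ) + b * Complex.I) (1 * Complex.I) b :=
          ((hasDerivAt_id b).ofReal_comp.mul_const Complex.I).const_add _
        rw [one_mul] at a1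
        exact ((hH (a + b * Complex.I)).comp b a1).hasDerivWithinAt)
      (fun b hb => by
        rw [norm_mul, Complex.norm_I, mul_one, wG, Complex.norm_exp, wG_expo]
        simp only [Complex.add_re, Complex.ofReal_re, Complex.mul_re, Complex.I_re, mul_zero,
          Complex.ofReal_im, zero_mul, sub_zero, add_zero, Real.exp_le_exp]
        have c1 : Real.cos b ≤ -(1/2) := by
          have : Real.cos b ≤ Real.cos (2 * π / 3) :=
            Real.cos_le_cos_of_nonneg_of_le_pi (by positivity) hb.2 hb.1
          have e : Real.cos (2 * π / 3) = -(1/2) := by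
            rw [show 2 * π / 3 = π - π / 3 by ring, Real.cos_pi_sub, Real.cos_pi_div_three]
          linarith
        have c2 := Real.neg_one_le_cos (α * b)
        have c3 := hC (Real.exp a) (Real.exp_pos a)
        rw [← Real.exp_mul, mul_comm a α] at c3
        have c4 := mul_le_mul_of_nonneg_left c1 (Real.exp_pos a).le
        have c5 := mul_pos hx (Real.exp_pos (α * a))
        nlinarith)
      ⟨by linarith, le_refl _⟩ ⟨hθ2.le, hθ.le⟩
    have k1 : ‖θ - π‖ ≤ π := by
      rw [Real.norm_eq_abs, abs_le]; constructor <;> linarith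
    have k2 : ‖(H (a + θ * Complex.I)).im - (H (a + π * Complex.I)).im‖ ≤
        ‖H (a + θ * Complex.I) - H (a + π * Complex.I)‖ := by
      rw [← Complex.sub_im]; exact Complex.abs_im_le_norm _
    exact k2.trans (key.trans (mul_le_mul_of_nonneg_left k1 (Real.exp_pos _).le))
  have hz : Tendsto (fun θ => Real.exp (-(1/4) * Real.exp (wl α x θ) + C) * π) (𝓝[<] π) (𝓝 0) := by
    have q1 : Tendsto (fun a : ℝ => -(1/4) * Real.exp a + C) atTop atBot :=
      tendsto_atBot_add_const_right _ _
        (Real.tendsto_exp_atTop.const_mul_atTop_of_neg (by norm_num))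
    have := ((Real.tendsto_exp_atBot.comp q1).comp hl).mul_const π
    simpa [Function.comp_def] using this
  have hdiff := squeeze_zero_norm' hbound hz
  have := hdiff.add hT
  simpa [Function.comp_def] using this

theorem w_lower (α x δ m : ℝ) (hα : 0 < α) (h1 : α < 1) (hx : 0 < x) (hδ : 0 < δ) (hδπ : δ < π)
    (hm : ∀ θ, 0 < θ → θ < δ → m ≤ wg α x θ) : m * δ ≤ π * wrightFn (-α) 1 (-x) := by
  obtain ⟨H, hH, h0⟩ := w_exists_H α x
  set φ : ℝ → ℝ := fun θ : ℝ => (H (wl α x θ + θ * Complex.I)).im with hφ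
  have hd : ∀ θ, 0 < θ → θ < π → HasDerivAt φ (wg α x θ) θ :=
    fun θ a b => w_phi_deriv α x θ hα h1 hx a b H hH
  have hpi := w_phi_pi α x hα h1 hx H hH h0
  have hz := w_phi_zero α x hα h1 hx H hH h0
  have hmono : ∀ θ, δ < θ → θ < π → φ δ ≤ φ θ := by
    intro θ a b
    have : MonotoneOn φ (Set.Icc δ θ) := by
      refine monotoneOn_of_deriv_nonneg (convex_Icc _ _) ?_ ?_ ?_
      · intro y hy
        exact (hd y (by linarith [hy.1]) (by linarith [hy.2])).continuousAt.continuousWithinAt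
      · intro y hy
        rw [interior_Icc] at hy
        exact (hd y (by linarith [hy.1]) (by linarith [hy.2])).differentiableAt.differentiableWithinAt
      · intro y hy
        rw [interior_Icc] at hy
        rw [(hd y (by linarith [hy.1]) (by linarith [hy.2])).deriv]
        exact (Real.exp_pos _).le
    exact this ⟨le_refl _, a.le⟩ ⟨a.le, le_refl _⟩ a.le
  have u1 : φ δ ≤ π * wrightFn (-α) 1 (-x) := by
    refine ge_of_tendsto hpi ?_
    have hev : ∀ᶠ θ : ℝ in 𝓝[<] π, δ < θ :=
      eventually_nhdsWithin_of_eventually_nhds (eventually_gt_nhds hδπ)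
    filter_upwards [self_mem_nhdsWithin, hev] with θ a b
    exact hmono θ b a
  have u2 : ∀ ε, 0 < ε → ε < δ → m * (δ - ε) ≤ φ δ - φ ε := by
    intro ε a b
    refine (convex_Icc ε δ).mul_sub_le_image_sub_of_le_deriv ?_ ?_ ?_ ε ⟨le_refl _, b.le⟩ δ
      ⟨b.le, le_refl _⟩ b.le
    · intro y hy
      exact (hd y (by linarith [hy.1]) (by linarith [hy.2])).continuousAt.continuousWithinAt
    · intro y hy
      rw [interior_Icc] at hy
      exact (hd y (by linarith [hy.1]) (by linarith [hy.2])).differentiableAt.differentiableWithinAt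
    · intro y hy
      rw [interior_Icc] at hy
      rw [(hd y (by linarith [hy.1]) (by linarith [hy.2])).deriv]
      exact hm y (by linarith [hy.1]) hy.2
  have u3 : m * (δ - 0) ≤ φ δ - 0 := by
    have t0 : Tendsto (fun θ : ℝ => θ) (𝓝[>] 0) (𝓝 0) := tendsto_id.mono_left nhdsWithin_le_nhds
    refine le_of_tendsto_of_tendsto ((t0.const_sub δ).const_mul m) (hz.const_sub (φ δ)) ?_
    have hev : ∀ᶠ θ : ℝ in 𝓝[>] 0, θ < δ :=
      eventually_nhdsWithin_of_eventually_nhds (eventually_lt_nhds hδ)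
    filter_upwards [self_mem_nhdsWithin, hev] with θ a b
    exact u2 θ a b
  linarith

set_option maxHeartbeats 2000000 in
theorem w_A_bound (α t θ : ℝ) (hα : 0 < α) (h1 : α < 1) (ht : 1 < t) (hθ0 : 0 < θ)
    (hθ : θ < t ^ (-(1 : ℝ) / 2)) :
    Real.exp (-gammaAlpha α * t - gammaAlpha α * ((1 + 1 / (1 - α)) * Real.exp (1 + 1 / (1 - α)))) ≤
      wg α (t ^ (1 - α)) θ := by
  have ht0 : 0 < t := by linarith
  have hsq : θ ^ 2 * t < 1 := by
    have a1 : (t ^ (-(1 : ℝ) / 2)) ^ 2 = t⁻¹ := by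
      rw [← rpow_natCast, ← rpow_mul ht0.le]; norm_num [rpow_neg_one]
    have a2 : θ ^ 2 < (t ^ (-(1 : ℝ) / 2)) ^ 2 := pow_lt_pow_left₀ hθ hθ0.le (by norm_num)
    rw [a1] at a2
    calc θ ^ 2 * t < t⁻¹ * t := mul_lt_mul_of_pos_right a2 ht0
      _ = 1 := inv_mul_cancel₀ ht0.ne'
  have hθ1 : θ < 1 := by nlinarith [sq_nonneg θ]
  have hpi := Real.pi_gt_three
  have s1 : 0 < Real.sin θ := Real.sin_pos_of_pos_of_lt_pi hθ0 (by linarith)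
  have haθ : 0 < α * θ := by positivity
  have s2 : 0 < Real.sin (α * θ) := Real.sin_pos_of_pos_of_lt_pi haθ (by nlinarith)
  set q := 1 / (1 - α) with hq
  have h1α : 0 < 1 - α := by linarith
  have hqp : 0 < q := by positivity
  set v := 1 - θ ^ 2 / 6 with hv
  have hv0 : 0 < v := by rw [hv]; nlinarith
  have b1 : θ * v ≤ Real.sin θ := by
    have := Real.sin_gt_sub_cube hθ0
    rw [hv]; nlinarith
  have b2 : α * θ * v ≤ Real.sin (α * θ) := by
    have := Real.sin_gt_sub_cube haθ
    have : (α * θ) ^ 3 ≤ α * θ * θ ^ 2 := by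
      have : α ^ 2 ≤ 1 := by nlinarith
      have h3 : 0 < α * θ ^ 3 := by positivity
      nlinarith
    rw [hv]; nlinarith
  have b3 : Real.sin (α * θ) ≤ α * θ := Real.sin_le haθ.le
  have b4 : Real.sin ((1 - α) * θ) ≤ (1 - α) * θ := Real.sin_le (by positivity)
  have hlb : wl α (t ^ (1 - α)) θ ≤ Real.log t + q * (Real.log α - Real.log v) := by
    have c1 : Real.log (Real.sin (α * θ)) ≤ Real.log α + Real.log θ := by
      rw [← Real.log_mul hα.ne' hθ0.ne']; exact Real.log_le_log s2 b3
    have c2 : Real.log θ + Real.log v ≤ Real.log (Real.sin θ) := by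
      rw [← Real.log_mul hθ0.ne' hv0.ne']; exact Real.log_le_log (by positivity) b1
    rw [wl, Real.log_rpow ht0, div_le_iff₀ h1α]
    have : (Real.log t + q * (Real.log α - Real.log v)) * (1 - α) =
      (1 - α) * Real.log t + (Real.log α - Real.log v) := by
      rw [hq]; field_simp
    rw [this]; linarith
  have hlv : -Real.log v ≤ θ ^ 2 := by
    have := Real.one_sub_inv_le_log_of_pos hv0
    have : v⁻¹ ≤ 1 + θ ^ 2 := by
      rw [inv_le_iff_one_le_mul₀ hv0, hv]; nlinarith [sq_nonneg θ]
    linarith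
  have hgam : gammaAlpha α = (1 - α) / α * Real.exp (q * Real.log α) := by
    rw [gammaAlpha, rpow_def_of_pos hα]
    have : Real.log α * (α / (1 - α)) = q * Real.log α - Real.log α := by
      rw [hq]; field_simp; ring
    rw [this, Real.exp_sub, Real.exp_log hα]; ring
  have hgp : 0 < gammaAlpha α := by rw [hgam]; positivity
  have hA : Real.exp (wl α (t ^ (1 - α)) θ) * Real.sin ((1 - α) * θ) / Real.sin (α * θ) ≤
      gammaAlpha α * t * Real.exp ((1 + q) * θ ^ 2) := by
    have d1 : Real.exp (wl α (t ^ (1 - α)) θ) ≤ t * Real.exp (q * Real.log α) * Real.exp (q * θ ^ 2) := by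
      rw [← Real.exp_log ht0, ← Real.exp_add, ← Real.exp_add, Real.exp_log ht0, Real.exp_le_exp]
      have := mul_le_mul_of_nonneg_left hlv hqp.le
      linarith
    have d2 : v⁻¹ ≤ Real.exp (θ ^ 2) := by
      rw [← Real.exp_log (inv_pos.mpr hv0), Real.log_inv]; exact Real.exp_le_exp.mpr hlv
    calc Real.exp (wl α (t ^ (1 - α)) θ) * Real.sin ((1 - α) * θ) / Real.sin (α * θ)
        ≤ (t * Real.exp (q * Real.log α) * Real.exp (q * θ ^ 2)) * ((1 - α) * θ) / (α * θ * v) := by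
          have s3 : 0 ≤ Real.sin ((1 - α) * θ) :=
            Real.sin_nonneg_of_nonneg_of_le_pi (by positivity) (by nlinarith)
          gcongr
      _ = (gammaAlpha α * t * Real.exp (q * θ ^ 2)) * v⁻¹ := by rw [hgam]; field_simp
      _ ≤ (gammaAlpha α * t * Real.exp (q * θ ^ 2)) * Real.exp (θ ^ 2) := by gcongr
      _ = _ := by
        rw [mul_assoc, ← Real.exp_add]; congr 2; ring
  rw [wg, Real.exp_le_exp]
  set y := (1 + q) * θ ^ 2 with hy
  have hy0 : 0 ≤ y := by positivity
  have hyq : y ≤ 1 + q := by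
    have : θ ^ 2 ≤ 1 := by nlinarith
    rw [hy]; nlinarith
  have hyt : t * y ≤ 1 + q := by rw [hy]; nlinarith
  have k1 : Real.exp y ≤ 1 + y * Real.exp y := by
    have := Real.add_one_le_exp (-y)
    have h2 : Real.exp (-y) * Real.exp y = 1 := by rw [← Real.exp_add]; simp
    nlinarith [Real.exp_pos y]
  have k2 : t * Real.exp y ≤ t + (1 + q) * Real.exp (1 + q) := by
    calc t * Real.exp y ≤ t * (1 + y * Real.exp y) := by gcongr
      _ = t + (t * y) * Real.exp y := by ring
      _ ≤ t + (1 + q) * Real.exp (1 + q) := by gcongr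
  have k3 := mul_le_mul_of_nonneg_left k2 hgp.le
  nlinarith

theorem w_main (α : ℝ) (hα : 0 < α) (h1 : α < 1) : ∃ C : ℝ, 0 < C ∧ ∀ t : ℝ, 1 < t →
      wrightFn (-α) 1 (-(t ^ (1 - α))) ≥
        C * t ^ (-(1 : ℝ) / 2) * Real.exp (-(gammaAlpha α) * t) := by
  set c := gammaAlpha α * ((1 + 1 / (1 - α)) * Real.exp (1 + 1 / (1 - α))) with hc
  refine ⟨Real.exp (-c) / π, by positivity, fun t ht => ?_⟩
  have ht0 : 0 < t := by linarith
  have hδ : t ^ (-(1 : ℝ) / 2) < π := by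
    have : t ^ (-(1 : ℝ) / 2) < 1 := rpow_lt_one_of_one_lt_of_neg ht (by norm_num)
    linarith [Real.pi_gt_three]
  have := w_lower α (t ^ (1 - α)) (t ^ (-(1 : ℝ) / 2)) _ hα h1 (by positivity) (by positivity) hδ
    (fun θ a b => w_A_bound α t θ hα h1 ht a b)
  rw [← hc, sub_eq_add_neg, Real.exp_add] at this
  have hp := Real.pi_pos
  rw [ge_iff_le, div_mul_eq_mul_div, div_mul_eq_mul_div, div_le_iff₀ hp]
  linarith

theorem stmt11 (α : ℝ) (hα : α ∈ Set.Ioo (0 : ℝ) 1) :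
    (∃ C : ℝ, 0 < C ∧ ∃ tstar : ℝ, 0 < tstar ∧ ∀ t : ℝ, tstar < t →
      wrightFn (-α) 1 (-(t ^ (1 - α))) ≥
        C * t ^ (-(1 : ℝ) / 2) * Real.exp (-(gammaAlpha α) * t)) ∧
    (∃ C' : ℝ, 0 < C' ∧ ∃ tstarstar : ℝ, 0 < tstarstar ∧ ∀ t : ℝ, tstarstar < t →
      wrightFn (-α) 1 (-(2 * t ^ (1 - α))) ≥
        C' * t ^ (-(1 : ℝ) / 2) * Real.exp (-(gammaAlpha α) * 2 ^ (1 / (1 - α)) * t)) := by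
  obtain ⟨C, hC, h⟩ := w_main α hα.1 hα.2
  have h1α : 0 < 1 - α := by linarith [hα.2]
  refine ⟨⟨C, hC, 1, one_pos, h⟩, ?_⟩
  set s : ℝ := 2 ^ (1 / (1 - α)) with hs
  have hs1 : 1 < s := one_lt_rpow (by norm_num) (by positivity)
  have hs0 : 0 < s := by linarith
  refine ⟨C * s ^ (-(1 : ℝ) / 2), by positivity, 1, one_pos, fun t ht => ?_⟩
  have ht0 : 0 < t := by linarith
  have := h (s * t) (by nlinarith)
  rw [mul_rpow hs0.le ht0.le, mul_rpow hs0.le ht0.le] at this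
  have e : s ^ (1 - α) = 2 := by
    rw [hs, ← rpow_mul (by norm_num), one_div_mul_cancel h1α.ne', rpow_one]
  rw [e] at this
  convert this using 1
  rw [mul_assoc C, mul_assoc (-gammaAlpha α)]
end

section
/- Let α ∈ (0,1). Then W_{-α,1}(-2 t^{1-α}) / W_{-α,1}(-t^{1-α}) → 0 as t → ∞. -/
open Real Filter Topology

lemma exV (α x : ℝ) : ∃ V : ℝ → ℝ → ℝ, Continuous (fun p : ℝ × ℝ => V p.1 p.2) ∧
    ∀ (u th : ℝ → ℝ) (u' th' s : ℝ), HasDerivAt u u' s → HasDerivAt th th' s →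
      HasDerivAt (fun s => V (u s) (th s))
        (exp (exp (u s) * cos (th s) - x * (exp (α * u s) * cos (α * th s))) *
          (sin (exp (u s) * sin (th s) - x * (exp (α * u s) * sin (α * th s))) * u' +
           cos (exp (u s) * sin (th s) - x * (exp (α * u s) * sin (α * th s))) * th')) s := by
  have hd : Differentiable ℂ (fun w : ℂ => Complex.exp (Complex.exp w - x * Complex.exp (α * w))) := by
    fun_prop
  obtain ⟨H, hH⟩ := hd.isExactOn_univ
  have hHd : Differentiable ℂ H := fun z => (hH z trivial).differentiableAt
  refine ⟨fun u th => (H (u + th * Complex.I)).im, ?_, ?_⟩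
  · have := hHd.continuous
    fun_prop
  · intro u th u' th' s hu hth
    have h1 : HasDerivAt (fun s : ℝ => ((u s : ℂ) + (th s : ℂ) * Complex.I))
        ((u' : ℂ) + th' * Complex.I) s :=
      hu.ofReal_comp.add (hth.ofReal_comp.mul_const _)
    have h2 := (hH ((u s : ℂ) + (th s : ℂ) * Complex.I) trivial).comp_of_eq s h1 rfl
    have h3 := (Complex.imCLM.hasFDerivAt.comp_hasDerivAt s h2)
    refine HasDerivAt.congr_deriv h3 ?_
    show (Complex.exp (Complex.exp ((u s : ℂ) + th s * Complex.I) - x * Complex.exp (α * ((u s : ℂ) + th s * Complex.I))) * ((u' : ℂ) + th' * Complex.I)).im = _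
    have e1 : Complex.exp ((u s : ℂ) + th s * Complex.I) =
        ⟨exp (u s) * cos (th s), exp (u s) * sin (th s)⟩ := by
      apply Complex.ext <;> simp [Complex.exp_re, Complex.exp_im]
    have e2 : Complex.exp (α * ((u s : ℂ) + th s * Complex.I)) =
        ⟨exp (α * u s) * cos (α * th s), exp (α * u s) * sin (α * th s)⟩ := by
      apply Complex.ext <;> simp [Complex.exp_re, Complex.exp_im]
    rw [e1, e2]
    simp [Complex.exp_re, Complex.exp_im]
    ring

lemma hasSum_cg {f g : ℕ → ℝ} {a : ℝ} (h : ∀ n, f n = g n) (hg : HasSum g a) : HasSum f a := by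
  rw [funext h]; exact hg

lemma gsum (α x : ℝ) (h0 : 0 < α) (h1 : α < 1) (hx : 0 < x) :
    Summable (fun n : ℕ => x ^ n / n.factorial * Gamma (α * n)) := by
  have hs : Summable (fun n : ℕ => x ^ n * ((n.factorial : ℝ) ^ (α - 1)) / α) := by
    apply Summable.div_const
    apply summable_of_ratio_test_tendsto_lt_one (l := 0) (by norm_num)
    · exact Eventually.of_forall fun n => by positivity
    · have : Tendsto (fun n : ℕ => x * ((n + 1 : ℕ) : ℝ) ^ (-(1 - α))) atTop (𝓝 (x * 0)) := by
        apply Tendsto.const_mul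
        exact (tendsto_rpow_neg_atTop (by linarith)).comp
          (tendsto_natCast_atTop_atTop.comp (tendsto_add_atTop_nat 1))
      rw [mul_zero] at this
      refine this.congr fun n => ?_
      rw [Real.norm_of_nonneg (by positivity), Real.norm_of_nonneg (by positivity),
        Nat.factorial_succ]
      push_cast
      rw [Real.mul_rpow (by positivity) (by positivity), pow_succ, neg_sub]
      field_simp
  refine Summable.of_norm_bounded_eventually_nat hs ?_
  filter_upwards [eventually_ge_atTop 1] with n hn
  have hn' : (1 : ℝ) ≤ n := by exact_mod_cast hn
  have hp : 0 < α * n := by positivity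
  rw [Real.norm_of_nonneg (mul_nonneg (by positivity) (Gamma_pos_of_pos hp).le)]
  have g1 := Gamma_mul_add_mul_le_rpow_Gamma_mul_rpow_Gamma (s := n + 1) (t := 1) (a := α)
    (b := 1 - α) (by positivity) one_pos h0 (by linarith) (by ring)
  rw [Gamma_nat_eq_factorial, Gamma_one, one_rpow, mul_one, mul_one,
    show α * ((n : ℝ) + 1) + (1 - α) = α * n + 1 by ring, Gamma_add_one hp.ne'] at g1
  have g2 : α * Gamma (α * n) ≤ (n.factorial : ℝ) ^ α := by
    refine le_trans ?_ g1
    have := (Gamma_pos_of_pos hp).le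
    have : 0 ≤ α * Gamma (α * n) := by positivity
    nlinarith
  have hf : (0:ℝ) < n.factorial := by positivity
  rw [Real.rpow_sub_one hf.ne']
  have : Gamma (α * n) ≤ (n.factorial : ℝ) ^ α / α := by
    rw [le_div_iff₀ h0]; linarith
  calc x ^ n / n.factorial * Gamma (α * n) ≤ x ^ n / n.factorial * ((n.factorial : ℝ) ^ α / α) := by gcongr
    _ = _ := by ring

noncomputable def wJ (α x r : ℝ) : ℝ :=
  exp (-r - x * (r ^ α * cos (α * π))) * sin (-(x * (r ^ α * sin (α * π)))) / r

lemma wJ_cont (α x : ℝ) : ContinuousOn (wJ α x) (Set.Ioi 0) := by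
  intro r hr
  have : r ≠ 0 := (Set.mem_Ioi.1 hr).ne'
  apply ContinuousAt.continuousWithinAt
  unfold wJ
  have h2 : ContinuousAt (fun r : ℝ => r ^ α) r := Real.continuousAt_rpow_const _ _ (Or.inl this)
  fun_prop (disch := assumption)

lemma wJ_int (α x : ℝ) (h0 : 0 < α) (h1 : α < 1) (hx : 0 < x) :
    MeasureTheory.IntegrableOn (wJ α x) (Set.Ioi 0) := by
  set R := (2 * x) ^ (1 / (1 - α)) with hR
  have hR0 : 0 < R := by positivity
  have hb : ∀ r : ℝ, 0 < r → x * r ^ α ≤ r / 2 + x * R ^ α := by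
    intro r hr
    rcases le_total r R with h | h
    · have : r ^ α ≤ R ^ α := by gcongr
      nlinarith
    · have : 2 * x ≤ r ^ (1 - α) := by
        calc 2 * x = R ^ (1 - α) := by
              rw [hR, ← Real.rpow_mul (by positivity), one_div_mul_cancel (by linarith), rpow_one]
          _ ≤ r ^ (1 - α) := by
              apply Real.rpow_le_rpow hR0.le h (by linarith)
      have h3 : r = r ^ (1 - α) * r ^ α := by
        rw [← Real.rpow_add hr]; simp
      have h4 : 0 < r ^ α := by positivity
      have h5 : 0 < x * R ^ α := by positivity
      nlinarith
  have hg : MeasureTheory.IntegrableOn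
      (fun r : ℝ => x * exp (x * R ^ α) * (r ^ (α - 1) * exp (-(1/2) * r ^ (1:ℝ)))) (Set.Ioi 0) := by
    apply MeasureTheory.Integrable.const_mul
    exact integrableOn_rpow_mul_exp_neg_mul_rpow (by linarith) (by norm_num) (by norm_num)
  refine MeasureTheory.Integrable.mono' hg
    ((wJ_cont α x).aestronglyMeasurable measurableSet_Ioi) ?_
  refine (MeasureTheory.ae_restrict_iff' measurableSet_Ioi).2 (Eventually.of_forall ?_)
  intro r hr
  have hr : 0 < r := hr
  unfold wJ
  have hra : 0 < r ^ α := by positivity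
  rw [Real.norm_eq_abs, abs_div, abs_mul, abs_of_pos hr, Real.abs_exp, sin_neg, abs_neg,
    Real.rpow_sub_one hr.ne', rpow_one]
  have s1 : |sin (x * (r ^ α * sin (α * π)))| ≤ x * r ^ α := by
    refine (Real.abs_sin_le_abs).trans ?_
    rw [abs_mul, abs_mul, abs_of_pos hx, abs_of_pos hra]
    have := abs_sin_le_one (α * π)
    have : r ^ α * |sin (α * π)| ≤ r ^ α := by nlinarith
    nlinarith
  have s2 : exp (-r - x * (r ^ α * cos (α * π))) ≤ exp (x * R ^ α) * exp (-(1/2) * r) := by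
    rw [← exp_add]
    apply exp_le_exp.2
    have := neg_one_le_cos (α * π)
    have h3 := hb r hr
    have : 0 ≤ (x * r ^ α) * (1 + cos (α * π)) := by
      apply mul_nonneg (by positivity); linarith
    nlinarith
  calc _ ≤ (exp (x * R ^ α) * exp (-(1/2) * r)) * (x * r ^ α) / r := by gcongr
    _ = _ := by ring

lemma wser (α x : ℝ) (h0 : 0 < α) (h1 : α < 1) (hx : 0 < x) :
    HasSum (fun n : ℕ => (-x) ^ n / (n.factorial * Gamma (-α * n + 1)))
      ((∫ r in Set.Ioi 0, wJ α x r) / π + 1) := by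
  let c : ℕ → ℝ := fun n => (-x) ^ n / n.factorial * (sin (n * (α * π)) / π)
  let F : ℕ → ℝ → ℝ := fun n r => c n * (exp (-r) * r ^ (α * n - 1))
  have c0 : c 0 = 0 := by simp [c]
  have hFi : ∀ n, MeasureTheory.IntegrableOn (F n) (Set.Ioi 0) := by
    intro n
    rcases Nat.eq_zero_or_pos n with rfl | hn
    · simp [F, c0]
    · apply MeasureTheory.Integrable.const_mul
      exact GammaIntegral_convergent (by positivity)
  have hFint : ∀ n, ∫ r in Set.Ioi 0, F n r = c n * Gamma (α * n) := by
    intro n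
    rcases Nat.eq_zero_or_pos n with rfl | hn
    · simp [F, c0]
    · simp only [F]
      rw [MeasureTheory.integral_const_mul, Gamma_eq_integral (by positivity)]
  have hFn : ∀ n, ∫ r in Set.Ioi 0, ‖F n r‖ = |c n| * Gamma (α * n) := by
    intro n
    rcases Nat.eq_zero_or_pos n with rfl | hn
    · simp [F, c0]
    · rw [Gamma_eq_integral (by positivity), ← MeasureTheory.integral_const_mul]
      apply MeasureTheory.setIntegral_congr_fun measurableSet_Ioi
      intro r hr
      have hr : 0 < r := hr
      simp only [F, norm_mul, Real.norm_eq_abs, Real.abs_exp, abs_of_pos (Real.rpow_pos_of_pos hr _)]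
  have hs : Summable fun n => ∫ r in Set.Ioi 0, ‖F n r‖ := by
    simp_rw [hFn]
    refine Summable.of_nonneg_of_le (fun n => ?_) (fun n => ?_) ((gsum α x h0 h1 hx).div_const π)
    · exact mul_nonneg (abs_nonneg _) (Gamma_nonneg_of_nonneg (by positivity))
    · have hG : 0 ≤ Gamma (α * n) := Gamma_nonneg_of_nonneg (by positivity)
      have : |c n| ≤ x ^ n / n.factorial * (1 / π) := by
        simp only [c]
        rw [abs_mul, abs_div, abs_div, abs_pow, abs_neg, abs_of_pos hx, abs_of_pos pi_pos, Nat.abs_cast]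
        gcongr
        exact abs_sin_le_one _
      calc _ ≤ x ^ n / n.factorial * (1 / π) * Gamma (α * n) := by gcongr
        _ = _ := by ring
  have key := MeasureTheory.hasSum_integral_of_summable_integral_norm hFi hs
  have hJ : ∫ r in Set.Ioi 0, ∑' n, F n r = (∫ r in Set.Ioi 0, wJ α x r) / π := by
    rw [← MeasureTheory.integral_div]
    apply MeasureTheory.setIntegral_congr_fun measurableSet_Ioi
    intro r hr
    have hr : 0 < r := hr
    refine HasSum.tsum_eq ?_
    have e := NormedSpace.exp_series_hasSum_exp' (𝕂 := ℂ)
      (-(x * (r ^ α : ℝ)) * Complex.exp ((α * π : ℝ) * Complex.I) : ℂ)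
    rw [← Complex.exp_eq_exp_ℂ] at e
    have e2 := (Complex.hasSum_im e).mul_left (exp (-r) / r / π)
    suffices hh : (∀ n, F n r = exp (-r) / r / π * ((n.factorial : ℂ)⁻¹ • (-(x * (r ^ α : ℝ)) * Complex.exp ((α * π : ℝ) * Complex.I) : ℂ) ^ n).im) ∧
        wJ α x r / π = exp (-r) / r / π * (Complex.exp (-(x * (r ^ α : ℝ)) * Complex.exp ((α * π : ℝ) * Complex.I) : ℂ)).im by
      show HasSum (fun n => F n r) (wJ α x r / π)
      rw [hh.2]
      exact hasSum_cg hh.1 e2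
    constructor
    · intro n
      have h3 : ((n.factorial : ℂ)⁻¹ • (-(x * (r ^ α : ℝ)) * Complex.exp ((α * π : ℝ) * Complex.I) : ℂ) ^ n)
         = (((n.factorial : ℝ)⁻¹ * (-(x * (r ^ α : ℝ))) ^ n : ℝ) : ℂ) * Complex.exp ((n * (α * π) : ℝ) * Complex.I) := by
        rw [mul_pow, ← Complex.exp_nat_mul, smul_eq_mul]
        push_cast
        ring_nf
      rw [h3, Complex.im_ofReal_mul, Complex.exp_ofReal_mul_I_im]
      simp only [F, c]
      rw [Real.rpow_sub_one hr.ne', Real.rpow_mul hr.le, Real.rpow_natCast, neg_pow (x * r ^ α), mul_pow, neg_pow x]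
      ring
    · rw [Complex.exp_im]
      have : (-(x * (r ^ α : ℝ)) * Complex.exp ((α * π : ℝ) * Complex.I) : ℂ) =
         ⟨-(x * (r ^ α * cos (α * π))), -(x * (r ^ α * sin (α * π)))⟩ := by
        apply Complex.ext <;> simp [Complex.exp_re, Complex.exp_im, mul_assoc]
      rw [this]
      simp only [wJ]
      rw [sub_eq_add_neg, exp_add]
      ring
  rw [hJ] at key
  have key2 := key.add (hasSum_ite_eq (0:ℕ) (1:ℝ))
  refine hasSum_cg (fun n => ?_) key2
  rw [hFint]
  rcases Nat.eq_zero_or_pos n with rfl | hn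
  · simp [c0]
  · have hp : 0 < α * n := by positivity
    have hG := Gamma_pos_of_pos hp
    have r := Real.Gamma_mul_Gamma_one_sub (α * n)
    have r2 : Gamma (-α * n + 1) = π / sin (π * (α * n)) / Gamma (α * n) := by
      rw [← r]; field_simp; ring_nf
    rw [r2]
    simp only [c, hn.ne', if_false]
    rw [show π * (α * n) = n * (α * π) by ring]
    simp only [div_eq_mul_inv, mul_inv, inv_inv]
    ring

noncomputable def wq (α θ : ℝ) : ℝ := sin (α * θ) / sin θ

noncomputable def wA (α θ : ℝ) : ℝ :=
  wq α θ ^ (1 / (1 - α)) * (sin ((1 - α) * θ) / sin (α * θ))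

noncomputable def wrho (α x θ : ℝ) : ℝ := log (x * wq α θ) / (1 - α)

lemma wsin_pos {α θ : ℝ} (h0 : 0 < α) (h1 : α < 1) (hθ : θ ∈ Set.Ioo 0 π) : 0 < sin (α * θ) := by
  apply sin_pos_of_pos_of_lt_pi (mul_pos h0 hθ.1)
  nlinarith [hθ.1, hθ.2]

lemma wq_pos {α θ : ℝ} (h0 : 0 < α) (h1 : α < 1) (hθ : θ ∈ Set.Ioo 0 π) : 0 < wq α θ :=
  div_pos (wsin_pos h0 h1 hθ) (sin_pos_of_mem_Ioo hθ)

lemma wsin_ge {α θ : ℝ} (h0 : 0 < α) (h1 : α < 1) (hθ : θ ∈ Set.Ioo 0 π) :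
    α * sin θ ≤ sin (α * θ) := by
  have hh := strictConcaveOn_sin_Icc.concaveOn
  have hz : (0 : ℝ) ∈ Set.Icc 0 π := ⟨le_rfl, pi_pos.le⟩
  have h2 : (0 : ℝ) ≤ 1 - α := by linarith
  have := hh.2 (Set.Ioo_subset_Icc_self hθ) hz h0.le h2 (by ring)
  simpa using this

lemma wA_ge {α θ : ℝ} (h0 : 0 < α) (h1 : α < 1) (hθ : θ ∈ Set.Ioo 0 π) :
    α ^ (1 / (1 - α) - 1) * (1 - α) ≤ wA α θ := by
  have hs := sin_pos_of_mem_Ioo hθ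
  have hsa := wsin_pos h0 h1 hθ
  have hq := wq_pos h0 h1 hθ
  have e : wA α θ = wq α θ ^ (1 / (1 - α) - 1) * (sin ((1 - α) * θ) / sin θ) := by
    rw [Real.rpow_sub_one hq.ne', wA]
    simp only [wq]
    field_simp
  have hk : 0 ≤ 1 / (1 - α) - 1 := by
    rw [sub_nonneg, le_div_iff₀ (by linarith)]; linarith
  rw [e]
  have := wsin_ge h0 h1 hθ
  have h2 := wsin_ge (α := 1 - α) (by linarith) (by linarith) hθ
  have h3 : α ≤ wq α θ := by rw [wq, le_div_iff₀ hs]; exact this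
  have h4 : 1 - α ≤ sin ((1 - α) * θ) / sin θ := by rw [le_div_iff₀ hs]; exact h2
  have h5 : 0 ≤ 1 - α := by linarith
  gcongr

lemma wexp1 {α x θ : ℝ} (h0 : 0 < α) (h1 : α < 1) (hx : 0 < x) (hθ : θ ∈ Set.Ioo 0 π) :
    exp (wrho α x θ) = exp (α * wrho α x θ) * (x * wq α θ) := by
  have hq := wq_pos h0 h1 hθ
  have : x * wq α θ = exp ((1 - α) * wrho α x θ) := by
    rw [wrho, mul_div_cancel₀ _ (by linarith), exp_log (by positivity)]
  rw [this, ← exp_add]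
  ring_nf

lemma wexp2 {α x θ : ℝ} (h0 : 0 < α) (h1 : α < 1) (hx : 0 < x) (hθ : θ ∈ Set.Ioo 0 π) :
    exp (wrho α x θ) = x ^ (1 / (1 - α)) * wq α θ ^ (1 / (1 - α)) := by
  have hq := wq_pos h0 h1 hθ
  rw [← Real.mul_rpow hx.le hq.le, Real.rpow_def_of_pos (by positivity), wrho]
  ring_nf

lemma wb_zero {α x θ : ℝ} (h0 : 0 < α) (h1 : α < 1) (hx : 0 < x) (hθ : θ ∈ Set.Ioo 0 π) :
    exp (wrho α x θ) * sin θ - x * (exp (α * wrho α x θ) * sin (α * θ)) = 0 := by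
  have hs := sin_pos_of_mem_Ioo hθ
  rw [wexp1 h0 h1 hx hθ, wq]
  field_simp
  ring

lemma wa_eq {α x θ : ℝ} (h0 : 0 < α) (h1 : α < 1) (hx : 0 < x) (hθ : θ ∈ Set.Ioo 0 π) :
    exp (wrho α x θ) * cos θ - x * (exp (α * wrho α x θ) * cos (α * θ)) =
      -(x ^ (1 / (1 - α)) * wA α θ) := by
  have hs := sin_pos_of_mem_Ioo hθ
  have hsa := wsin_pos h0 h1 hθ
  rw [wA, ← mul_assoc (x ^ (1 / (1 - α))), ← wexp2 h0 h1 hx hθ, wexp1 h0 h1 hx hθ, wq,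
    show (1 - α) * θ = θ - α * θ by ring, sin_sub]
  field_simp
  ring

lemma wq_tendsto_zero {α : ℝ} : Tendsto (wq α) (𝓝[>] 0) (𝓝 α) := by
  have h : Tendsto (fun θ => α * sinc (α * θ) / sinc θ) (𝓝[>] 0) (𝓝 α) := by
    have : ContinuousAt (fun θ => α * sinc (α * θ) / sinc θ) 0 := by
      have h2 := continuous_sinc
      apply ContinuousAt.div
      · fun_prop
      · fun_prop
      · simp
    have h3 := this.tendsto
    simp only [mul_zero, sinc_zero, mul_one, div_one] at h3
    exact h3.mono_left nhdsWithin_le_nhds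
  refine h.congr' ?_
  filter_upwards [self_mem_nhdsWithin] with θ hθ
  have hθ : θ ≠ 0 := (Set.mem_Ioi.1 hθ).ne'
  by_cases ha : α = 0
  · subst ha; simp [wq]
  rw [sinc_of_ne_zero hθ, sinc_of_ne_zero (mul_ne_zero ha hθ), wq]
  field_simp

lemma wq_tendsto_pi {α : ℝ} (h0 : 0 < α) (h1 : α < 1) : Tendsto (wq α) (𝓝[<] π) atTop := by
  have hs : 0 < sin (α * π) := by
    apply sin_pos_of_pos_of_lt_pi (by positivity)
    nlinarith [pi_pos]
  have e1 : Tendsto (fun θ => sin (α * θ)) (𝓝[<] π) (𝓝 (sin (α * π))) :=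
    (Continuous.tendsto (by fun_prop) π).mono_left nhdsWithin_le_nhds
  have e2 : Tendsto sin (𝓝[<] π) (𝓝[>] 0) := by
    apply tendsto_nhdsWithin_iff.2 ⟨?_, ?_⟩
    · have := (continuous_sin.tendsto π).mono_left (nhdsWithin_le_nhds (s := Set.Iio π))
      simpa using this
    · filter_upwards [Ioo_mem_nhdsLT pi_pos] with θ hθ using sin_pos_of_mem_Ioo hθ
  exact e1.pos_mul_atTop hs (tendsto_inv_nhdsGT_zero.comp e2)

lemma kanter (α x : ℝ) (h0 : 0 < α) (h1 : α < 1) (hx : 0 < x) :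
    ∫ θ in (0:ℝ)..π, exp (-(x ^ (1 / (1 - α)) * wA α θ)) = π + ∫ r in Set.Ioi 0, wJ α x r := by
  obtain ⟨V, hVc, hV⟩ := exV α x
  set c := V 0 0 with hc
  -- real axis
  have hV0 : ∀ u, V u 0 = c := by
    intro u
    have hd : ∀ s, HasDerivAt (fun s => V s 0) 0 s := by
      intro s
      have := hV (fun s => s) (fun _ => 0) 1 0 s (hasDerivAt_id s) (hasDerivAt_const s 0)
      simpa using this
    exact is_const_of_deriv_eq_zero (fun s => (hd s).differentiableAt) (fun s => (hd s).deriv) u 0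
  have hVth : ∀ u θ, HasDerivAt (V u) (exp (exp u * cos θ - x * (exp (α * u) * cos (α * θ))) *
      cos (exp u * sin θ - x * (exp (α * u) * sin (α * θ)))) θ := by
    intro u θ
    have := hV (fun _ => u) (fun s => s) 0 1 θ (hasDerivAt_const θ u) (hasDerivAt_id θ)
    simpa using this
  -- left vertical
  have hleft : Tendsto (fun u => V u π) atBot (𝓝 (c + π)) := by
    have hmv : ∀ u, ∃ ξ : ℝ, V u π = c + π * (exp (exp u * cos ξ - x * (exp (α * u) * cos (α * ξ))) *
      cos (exp u * sin ξ - x * (exp (α * u) * sin (α * ξ)))) := by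
      intro u
      obtain ⟨ξ, -, h⟩ := exists_hasDerivAt_eq_slope (V u) _ pi_pos
        (fun s _ => (hVth u s).continuousAt.continuousWithinAt) (fun s _ => hVth u s)
      refine ⟨ξ, ?_⟩
      rw [h, hV0]
      have := pi_ne_zero
      field_simp
      ring
    choose ξ hξ using hmv
    have hm : Tendsto (fun u => exp u + x * exp (α * u)) atBot (𝓝 0) := by
      have := tendsto_exp_atBot.add
        ((tendsto_exp_atBot.comp (tendsto_id.const_mul_atBot h0)).const_mul x)
      simpa using this
    have hbd : ∀ u p q : ℝ, |p| ≤ 1 → |q| ≤ 1 →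
        ‖exp u * p - x * (exp (α * u) * q)‖ ≤ exp u + x * exp (α * u) := by
      intro u p q hp hq
      rw [Real.norm_eq_abs]
      refine (abs_sub _ _).trans ?_
      rw [abs_mul, abs_mul, abs_mul, abs_of_pos hx, abs_exp, abs_exp]
      have := exp_pos u
      have := exp_pos (α * u)
      gcongr
      · nlinarith
      · nlinarith
    have ha := squeeze_zero_norm (fun u => hbd u (cos (ξ u)) (cos (α * ξ u))
      (abs_cos_le_one _) (abs_cos_le_one _)) hm
    have hb := squeeze_zero_norm (fun u => hbd u (sin (ξ u)) (sin (α * ξ u))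
      (abs_sin_le_one _) (abs_sin_le_one _)) hm
    have := (((continuous_exp.tendsto 0).comp ha).mul
      ((continuous_cos.tendsto 0).comp hb)).const_mul π |>.const_add c
    simp only [exp_zero, cos_zero, mul_one] at this
    exact this.congr fun u => (hξ u).symm
  -- top horizontal
  have htop : Tendsto (fun u => V u π) atTop (𝓝 (c + π + ∫ r in Set.Ioi 0, wJ α x r)) := by
    have hJ := wJ_int α x h0 h1 hx
    have hd : ∀ r, 0 < r → HasDerivAt (fun r => V (log r) π) (wJ α x r) r := by
      intro r hr
      have := hV log (fun _ => π) r⁻¹ 0 r (Real.hasDerivAt_log hr.ne') (hasDerivAt_const r π)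
      refine this.congr_deriv ?_
      rw [exp_log hr, show exp (α * log r) = r ^ α by rw [Real.rpow_def_of_pos hr, mul_comm]]
      simp only [wJ, cos_pi, sin_pi]
      ring_nf
    have hi : ∀ R, 0 < R → V (log R) π = c + π + ∫ r in (0:ℝ)..R, wJ α x r := by
      intro R hR
      rw [intervalIntegral.integral_eq_sub_of_hasDerivAt_of_tendsto hR
        (fun r hr => hd r hr.1) (fa := c + π) (fb := V (log R) π)]
      · ring
      · rw [intervalIntegrable_iff_integrableOn_Ioc_of_le hR.le]
        exact hJ.mono_set Set.Ioc_subset_Ioi_self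
      · exact hleft.comp tendsto_log_nhdsGT_zero
      · exact (hd R hR).continuousAt.tendsto.mono_left nhdsWithin_le_nhds
    have h2 := (MeasureTheory.intervalIntegral_tendsto_integral_Ioi 0 hJ tendsto_exp_atTop).const_add (c + π)
    refine h2.congr fun u => ?_
    rw [← hi _ (exp_pos u), log_exp]
  -- main path
  have hρd : ∀ θ ∈ Set.Ioo 0 π, DifferentiableAt ℝ (wrho α x) θ := by
    intro θ hθ
    have hs := sin_pos_of_mem_Ioo hθ
    have hq := wq_pos h0 h1 hθ
    have hqd : DifferentiableAt ℝ (wq α) θ := by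
      unfold wq
      exact DifferentiableAt.div (by fun_prop) (by fun_prop) hs.ne'
    unfold wrho
    exact ((hqd.const_mul x).log (by positivity)).div_const _
  have hpd : ∀ θ ∈ Set.Ioo 0 π, HasDerivAt (fun θ => V (wrho α x θ) θ)
      (exp (-(x ^ (1 / (1 - α)) * wA α θ))) θ := by
    intro θ hθ
    have := hV (wrho α x) (fun s => s) _ 1 θ (hρd θ hθ).hasDerivAt (hasDerivAt_id θ)
    refine this.congr_deriv ?_
    rw [wa_eq h0 h1 hx hθ, wb_zero h0 h1 hx hθ]
    simp
  rw [intervalIntegral.integral_eq_sub_of_hasDerivAt_of_tendsto pi_pos hpd (fa := c)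
    (fb := c + π + ∫ r in Set.Ioi 0, wJ α x r)]
  · ring
  · rw [intervalIntegrable_iff_integrableOn_Ioc_of_le pi_pos.le]
    refine MeasureTheory.Measure.integrableOn_of_bounded (M := 1) (by simp) ?_ ?_
    · apply Measurable.aestronglyMeasurable
      unfold wA wq
      fun_prop
    · rw [← MeasureTheory.restrict_Ioo_eq_restrict_Ioc]
      refine (MeasureTheory.ae_restrict_iff' measurableSet_Ioo).2 (Eventually.of_forall ?_)
      intro θ hθ
      rw [Real.norm_eq_abs, abs_exp, exp_le_one_iff, neg_nonpos]
      have : 0 ≤ 1 - α := by linarith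
      have := (wA_ge h0 h1 hθ)
      have : 0 ≤ wA α θ := le_trans (by positivity) this
      positivity
  · have hρ : Tendsto (wrho α x) (𝓝[>] 0) (𝓝 (log (x * α) / (1 - α))) := by
      unfold wrho
      exact ((wq_tendsto_zero.const_mul x).log (by positivity)).div_const _
    have := (hVc.tendsto (log (x * α) / (1 - α), 0)).comp
      (hρ.prodMk_nhds (tendsto_id.mono_left nhdsWithin_le_nhds))
    simp only [hV0] at this
    exact this
  · have hρ : Tendsto (wrho α x) (𝓝[<] π) atTop := by
      unfold wrho
      exact (tendsto_log_atTop.comp ((wq_tendsto_pi h0 h1).const_mul_atTop hx)).atTop_div_const (by linarith)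
    have hA := htop.comp hρ
    have hB : Tendsto (fun θ => V (wrho α x θ) π - V (wrho α x θ) θ) (𝓝[<] π) (𝓝 0) := by
      have hz : Tendsto (fun θ => π - θ) (𝓝[<] π) (𝓝 0) := by
        have := (Continuous.tendsto (f := fun θ => π - θ) (by fun_prop) π).mono_left
          (nhdsWithin_le_nhds (s := Set.Iio π))
        simpa using this
      refine squeeze_zero_norm' ?_ hz
      filter_upwards [(wq_tendsto_pi h0 h1).eventually_ge_atTop 2,
        Ioo_mem_nhdsLT (show π - π / 3 < π by linarith [pi_pos])] with θ hq hθ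
      have hθ' : θ ∈ Set.Ioo 0 π := ⟨by linarith [pi_pos, hθ.1], hθ.2⟩
      have := norm_image_sub_le_of_norm_deriv_le_segment' (f := V (wrho α x θ)) (a := θ) (b := π) (C := 1)
        (fun s _ => (hVth (wrho α x θ) s).hasDerivWithinAt) ?_ π ⟨hθ.2.le, le_rfl⟩
      · simpa using this
      · intro s hs
        rw [norm_mul, Real.norm_eq_abs, Real.norm_eq_abs, abs_exp]
        refine mul_le_one₀ ?_ (abs_nonneg _) (abs_cos_le_one _)
        rw [exp_le_one_iff]
        have hcos : cos s ≤ -(1/2) := by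
          have : cos s ≤ cos (π - π / 3) := by
            apply cos_le_cos_of_nonneg_of_le_pi (by linarith [pi_pos]) hs.2.le (by linarith [hθ.1, hs.1])
          rwa [cos_pi_sub, cos_pi_div_three] at this
        have e := wexp1 h0 h1 hx hθ'
        have p1 := exp_pos (α * wrho α x θ)
        have p2 := exp_pos (wrho α x θ)
        have c1 := neg_one_le_cos (α * s)
        have i1 : exp (α * wrho α x θ) * (x * 2) ≤ exp (wrho α x θ) := by
          rw [e]; gcongr
        have i2 : exp (wrho α x θ) * cos s ≤ exp (wrho α x θ) * -(1/2) := by gcongr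
        have i3 : 0 ≤ x * exp (α * wrho α x θ) * (1 + cos (α * s)) := by
          apply mul_nonneg (by positivity); linarith
        nlinarith
    have := hA.sub hB
    simpa using this

lemma wright_eq (α x : ℝ) (h0 : 0 < α) (h1 : α < 1) (hx : 0 < x) :
    wrightFn (-α) 1 (-x) = (∫ θ in (0:ℝ)..π, exp (-(x ^ (1 / (1 - α)) * wA α θ))) / π := by
  rw [wrightFn, (wser α x h0 h1 hx).tsum_eq, kanter α x h0 h1 hx]
  have := pi_ne_zero
  field_simp
  ring

lemma wint (α y : ℝ) (h0 : 0 < α) (h1 : α < 1) (hy : 0 ≤ y) :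
    IntervalIntegrable (fun θ => exp (-(y * wA α θ))) MeasureTheory.volume 0 π := by
  rw [intervalIntegrable_iff_integrableOn_Ioc_of_le pi_pos.le]
  refine MeasureTheory.Measure.integrableOn_of_bounded (M := 1) (by simp) ?_ ?_
  · apply Measurable.aestronglyMeasurable
    unfold wA wq
    fun_prop
  · rw [← MeasureTheory.restrict_Ioo_eq_restrict_Ioc]
    refine (MeasureTheory.ae_restrict_iff' measurableSet_Ioo).2 (Eventually.of_forall ?_)
    intro θ hθ
    rw [Real.norm_eq_abs, abs_exp, exp_le_one_iff, neg_nonpos]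
    have : 0 ≤ 1 - α := by linarith
    have := (wA_ge h0 h1 hθ)
    have : 0 ≤ wA α θ := le_trans (by positivity) this
    positivity

theorem stmt12 (α : ℝ) (hα : α ∈ Set.Ioo (0 : ℝ) 1) :
    Tendsto (fun t : ℝ =>
        wrightFn (-α) 1 (-(2 * t ^ (1 - α))) / wrightFn (-α) 1 (-(t ^ (1 - α))))
      atTop (nhds 0) := by
  obtain ⟨h0, h1⟩ := hα
  have h1' : 0 < 1 - α := by linarith
  set k : ℝ := 2 ^ (1 / (1 - α)) with hk
  have hk1 : 1 < k := Real.one_lt_rpow (by norm_num) (by positivity)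
  set m : ℝ := α ^ (1 / (1 - α) - 1) * (1 - α) with hm
  have hm0 : 0 < m := by positivity
  have hlim : Tendsto (fun t : ℝ => exp (-((k - 1) * m * t))) atTop (𝓝 0) := by
    apply tendsto_exp_neg_atTop_nhds_zero.comp
    exact tendsto_id.const_mul_atTop (mul_pos (by linarith) hm0)
  have main : ∀ᶠ t : ℝ in atTop,
      0 ≤ wrightFn (-α) 1 (-(2 * t ^ (1 - α))) / wrightFn (-α) 1 (-(t ^ (1 - α))) ∧
      wrightFn (-α) 1 (-(2 * t ^ (1 - α))) / wrightFn (-α) 1 (-(t ^ (1 - α))) ≤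
        exp (-((k - 1) * m * t)) := by
    filter_upwards [eventually_gt_atTop 0] with t ht
    have e1 : (t ^ (1 - α)) ^ (1 / (1 - α)) = t := by
      rw [← Real.rpow_mul ht.le, mul_one_div_cancel h1'.ne', rpow_one]
    have e2 : (2 * t ^ (1 - α)) ^ (1 / (1 - α)) = k * t := by
      rw [Real.mul_rpow (by norm_num) (by positivity), e1]
    rw [wright_eq α _ h0 h1 (by positivity), wright_eq α _ h0 h1 (by positivity), e1, e2,
      div_div_div_cancel_right₀ pi_ne_zero]
    have n1 : 0 ≤ ∫ θ in (0:ℝ)..π, exp (-(k * t * wA α θ)) :=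
      intervalIntegral.integral_nonneg pi_pos.le (fun _ _ => (exp_pos _).le)
    have n2 : 0 ≤ ∫ θ in (0:ℝ)..π, exp (-(t * wA α θ)) :=
      intervalIntegral.integral_nonneg pi_pos.le (fun _ _ => (exp_pos _).le)
    refine ⟨div_nonneg n1 n2, div_le_of_le_mul₀ n2 (exp_pos _).le ?_⟩
    rw [← intervalIntegral.integral_const_mul]
    refine intervalIntegral.integral_mono_on_of_le_Ioo pi_pos.le
      (wint α _ h0 h1 (by positivity)) ((wint α _ h0 h1 ht.le).const_mul _) ?_
    intro θ hθ
    rw [← exp_add]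
    apply exp_le_exp.2
    have := wA_ge h0 h1 hθ
    have : (k - 1) * t * m ≤ (k - 1) * t * wA α θ := by
      apply mul_le_mul_of_nonneg_left this
      apply mul_nonneg (by linarith) ht.le
    nlinarith
  exact tendsto_of_tendsto_of_tendsto_of_le_of_le' tendsto_const_nhds hlim
    (main.mono fun _ h => h.1) (main.mono fun _ h => h.2)
end
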